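/- arXiv:1307.5727 — 2 statements merged into one kernel-verified Lean document; each statement's English description precedes it below -/
import Mathlib

section
/- Let k be a real constant with 0 ≤ k < 1/15, and let S be a planar graph such that at most k|S| of its vertices have degree at most 2. Then S contains at least ((1−15k)/28)·|S| distinct cycles of length at most 6. -/
open SimpleGraph Filter Asymptotics

/-- `H` is a minor of `G`: to each vertex of `H` we can assign a connected nonempty
branch set in `G`, pairwise disjoint, with an edge of `G` between the branch sets of
any two adjacent vertices of `H`. -/
def IsMinor {α β : Type*} (H : SimpleGraph α) (G : SimpleGraph β) : Prop :=
  ∃ f : α → Set β,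
    (∀ a, (G.induce (f a)).Connected) ∧
    (∀ a b, a ≠ b → Disjoint (f a) (f b)) ∧
    (∀ a b, H.Adj a b → ∃ u ∈ f a, ∃ v ∈ f b, G.Adj u v)

/-- A graph is planar iff it has neither a `K₅`-minor nor a `K₃,₃`-minor
(Wagner's theorem). -/
def IsPlanar {V : Type*} (G : SimpleGraph V) : Prop :=
  ¬ IsMinor (completeGraph (Fin 5)) G ∧
    ¬ IsMinor (completeBipartiteGraph (Fin 3) (Fin 3)) G

/-- The number of edges of a graph. -/
noncomputable def edgeCount {V : Type*} (G : SimpleGraph V) : ℕ :=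
  G.edgeSet.ncard

/-- The degree of a vertex. -/
noncomputable def vertexDegree {V : Type*} (G : SimpleGraph V) (v : V) : ℕ :=
  (G.neighborSet v).ncard

/-- `𝒫(n,m)`: the set of labelled planar graphs on `{1,…,n}` with exactly `m` edges. -/
def planarSet (n m : ℕ) : Set (SimpleGraph (Fin n)) :=
  {G | IsPlanar G ∧ edgeCount G = m}

/-- The probability that the uniform random planar graph `P_{n,m}` satisfies `P`. -/
noncomputable def planarProb (n m : ℕ) (P : SimpleGraph (Fin n) → Prop) : ℝ :=
  ({G ∈ planarSet n m | P G}.ncard : ℝ) / ((planarSet n m).ncard : ℝ)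

/-- The number of pendant edges (edges incident to a vertex of degree 1). -/
noncomputable def pendantCount {V : Type*} (G : SimpleGraph V) : ℕ :=
  {e ∈ G.edgeSet | ∃ v ∈ e, vertexDegree G v = 1}.ncard

/-- The set of addable non-edges of `G`: non-edges whose addition keeps the graph planar. -/
def addableSet {V : Type*} (G : SimpleGraph V) : Set (Sym2 V) :=
  {e | ¬ e.IsDiag ∧ e ∉ G.edgeSet ∧ IsPlanar (G ⊔ SimpleGraph.fromEdgeSet {e})}

/-- `add(n,m)`: the minimum number of addable non-edges over all graphs in `𝒫(n,m)`. -/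
noncomputable def addMin (n m : ℕ) : ℕ :=
  sInf ((fun G => (addableSet G).ncard) '' planarSet n m)

/-- `W` carries an induced order-preserving copy of `H` in `G`: the increasing bijection
from `{1,…,h}` to `W` is an isomorphism between `H` and the induced subgraph `G[W]`. -/
def IsOrderCopy {h n : ℕ} (H : SimpleGraph (Fin h)) (G : SimpleGraph (Fin n))
    (W : Finset (Fin n)) : Prop :=
  ∃ hW : W.card = h,
    ∀ i j : Fin h,
      H.Adj i j ↔ G.Adj ((W.orderIsoOfFin hW i : Fin n)) ((W.orderIsoOfFin hW j : Fin n))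

/-- `W` is the vertex set of a connected component of `G`. -/
def IsComponent {V : Type*} (G : SimpleGraph V) (W : Finset V) : Prop :=
  (G.induce (W : Set V)).Connected ∧ ∀ v ∈ W, ∀ u, G.Adj v u → u ∈ W

/-- The number of components of `G` admitting an order-preserving isomorphism to `H`. -/
noncomputable def numOrderComponents {h n : ℕ} (H : SimpleGraph (Fin h))
    (G : SimpleGraph (Fin n)) : ℕ :=
  {W : Finset (Fin n) | IsComponent G W ∧ IsOrderCopy H G W}.ncard

/-- The number of distinct cycles (as subgraphs, identified with their edge sets) of
length at most `k` in `S`. -/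
noncomputable def cycleCountLe {V : Type*} (S : SimpleGraph V) (k : ℕ) : ℕ :=
  {E : Set (Sym2 V) | ∃ (v : V) (c : S.Walk v v),
    c.IsCycle ∧ c.length ≤ k ∧ {e | e ∈ c.edges} = E}.ncard

/-!
Delete one edge from every cycle of length at most six. This costs at most `c` edges, where `c` is
the number of these cycles, and leaves a planar graph `G` of girth at least seven, with `n` vertices
and `m` edges. By Mac Lane's criterion the cycle space of `G` over the two-element field, whose
dimension is at least `m - n`, is generated by vectors that together use every edge at most twice.
The support of a nonzero vector contains a cycle, hence at least seven edges, so `7(m - n) ≤ 2m`.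
Thus the original graph has at most `7n/5 + c` edges, whereas its degree sum is at least three times
the number of vertices of degree more than two.

Planarity means the absence of `K₅` and `K₃,₃` minors, so Mac Lane's criterion takes the place of
Euler's formula. For 3-connected graphs the generating vectors are the peripheral cycles: by Tutte
they span the cycle space, and three of them through one edge would produce a forbidden minor. In
general one glues along separators of order at most two. Generation is used in dual form: an edge
signing orthogonal to the generators is a coboundary, which turns spanning arguments into the
gluing of potentials.
-/

/-! ### Connected sets of vertices -/

section Connectivity

variable {V : Type*} {G : SimpleGraph V} {X Y : Set V}

/-- The vertex set `X` induces a connected or empty subgraph of `G`. -/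
def PreconnectedOn (G : SimpleGraph V) (X : Set V) : Prop :=
  (G.induce X).Preconnected

/-- Some edge of `G` joins `X` to `Y`. -/
def Touches (G : SimpleGraph V) (X Y : Set V) : Prop :=
  ∃ a ∈ X, ∃ b ∈ Y, G.Adj a b

lemma Touches.symm (h : Touches G X Y) : Touches G Y X :=
  let ⟨a, ha, b, hb, hab⟩ := h
  ⟨b, hb, a, ha, hab.symm⟩

lemma Touches.mono {X' Y' : Set V} (h : Touches G X Y) (hX : X ⊆ X') (hY : Y ⊆ Y') :
    Touches G X' Y' :=
  let ⟨a, ha, b, hb, hab⟩ := h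
  ⟨a, hX ha, b, hY hb, hab⟩

lemma preconnectedOn_iff :
    PreconnectedOn G X ↔
      ∀ S : Set V, (X ∩ S).Nonempty → (∀ a ∈ X ∩ S, ∀ b ∈ X, G.Adj a b → b ∈ S) → X ⊆ S := by
  constructor
  · rintro h S ⟨a, haX, haS⟩ hS b hbX
    by_contra hbS
    obtain ⟨w⟩ := h ⟨a, haX⟩ ⟨b, hbX⟩
    obtain ⟨d, -, hd₁, hd₂⟩ := w.exists_boundary_dart (Subtype.val ⁻¹' S) haS hbS
    exact hd₂ (hS _ ⟨d.fst.2, hd₁⟩ _ d.snd.2 d.adj)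
  · rintro h ⟨a, ha⟩ ⟨b, hb⟩
    obtain ⟨_, hab⟩ := h {v | ∃ hv : v ∈ X, (G.induce X).Reachable ⟨a, ha⟩ ⟨v, hv⟩}
      ⟨a, ha, ha, Reachable.refl _⟩
      (fun _ ⟨_, _, hc⟩ d hd hcd => ⟨hd, hc.trans (Adj.reachable (G := G.induce X) hcd)⟩) hb
    exact hab

lemma PreconnectedOn.connected_induce (h : PreconnectedOn G X) (hX : X.Nonempty) :
    (G.induce X).Connected :=
  have := hX.to_subtype
  ⟨h⟩

lemma PreconnectedOn.touches_diff (h : PreconnectedOn G X) {S : Set V}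
    (hS : (X ∩ S).Nonempty) (hS' : (X \ S).Nonempty) : Touches G (X ∩ S) (X \ S) := by
  by_contra hno
  obtain ⟨b, hbX, hbS⟩ := hS'
  refine hbS (preconnectedOn_iff.1 h S hS (fun a ha b hb hab => ?_) hbX)
  by_contra hbS
  exact hno ⟨a, ha, b, ⟨hb, hbS⟩, hab⟩

lemma preconnectedOn_of_subsingleton (h : X.Subsingleton) : PreconnectedOn G X :=
  preconnectedOn_iff.2 fun _ ⟨_, haX, haS⟩ _ _ hb => h haX hb ▸ haS

lemma preconnectedOn_singleton (a : V) : PreconnectedOn G {a} :=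
  preconnectedOn_of_subsingleton Set.subsingleton_singleton

lemma PreconnectedOn.sUnion {F : Set (Set V)} (hF : ∀ X ∈ F, PreconnectedOn G X)
    (hY : Y.Nonempty) (hYF : ∀ X ∈ F, Y ⊆ X) : PreconnectedOn G (⋃₀ F) := by
  refine preconnectedOn_iff.2 fun S ⟨a, ⟨X, hX, haX⟩, haS⟩ hS => Set.sUnion_subset fun Z hZ => ?_
  have hsub : ∀ Z ∈ F, (Z ∩ S).Nonempty → Z ⊆ S := fun Z hZ hZS =>
    preconnectedOn_iff.1 (hF Z hZ) S hZS fun c hc d hd =>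
      hS c ⟨⟨Z, hZ, hc.1⟩, hc.2⟩ d ⟨Z, hZ, hd⟩
  obtain ⟨y, hy⟩ := hY
  exact hsub Z hZ ⟨y, hYF Z hZ hy, hsub X hX ⟨a, haX, haS⟩ (hYF X hX hy)⟩

lemma PreconnectedOn.union (hX : PreconnectedOn G X) (hY : PreconnectedOn G Y)
    (h : (X ∩ Y).Nonempty) : PreconnectedOn G (X ∪ Y) := by
  rw [← Set.sUnion_pair]
  refine PreconnectedOn.sUnion (by simp [hX, hY]) h ?_
  simp

lemma PreconnectedOn.union_of_touches (hX : PreconnectedOn G X) (hY : PreconnectedOn G Y)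
    (h : Touches G X Y) : PreconnectedOn G (X ∪ Y) := by
  obtain ⟨a, ha, b, hb, hab⟩ := h
  have hpair : PreconnectedOn G {a, b} := preconnectedOn_iff.2 fun S hS hcl => by
    have := hcl a
    have := hcl b
    have := hab.symm
    simp only [Set.Nonempty, Set.mem_inter_iff, Set.mem_insert_iff, Set.mem_singleton_iff,
      Set.insert_subset_iff, Set.singleton_subset_iff] at *
    grind
  have := (hX.union hpair ⟨a, ha, by simp⟩).union hY ⟨b, by simp, hb⟩
  rwa [Set.union_assoc, Set.union_comm {a, b}, ← Set.union_assoc, Set.union_eq_left.2] at this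
  rintro _ (rfl | rfl)
  exacts [Or.inl ha, Or.inr hb]

lemma PreconnectedOn.insert_of_adj (hX : PreconnectedOn G X) {v : V} (h : ∃ a ∈ X, G.Adj v a) :
    PreconnectedOn G (insert v X) :=
  (preconnectedOn_singleton v).union_of_touches hX
    (let ⟨a, ha, hva⟩ := h; ⟨v, rfl, a, ha, hva⟩)

lemma PreconnectedOn.exists_component (hY : PreconnectedOn G Y) (hne : Y.Nonempty) (hYX : Y ⊆ X) :
    ∃ K, Y ⊆ K ∧ K ⊆ X ∧ PreconnectedOn G K ∧ ∀ a ∈ K, ∀ b ∈ X, G.Adj a b → b ∈ K := by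
  refine ⟨⋃₀ {K | Y ⊆ K ∧ K ⊆ X ∧ PreconnectedOn G K}, ?_, ?_, ?_, ?_⟩
  · exact Set.subset_sUnion_of_mem ⟨subset_rfl, hYX, hY⟩
  · exact Set.sUnion_subset fun K hK => hK.2.1
  · exact PreconnectedOn.sUnion (fun K hK => hK.2.2) hne fun K hK => hK.1
  · rintro a ⟨K, ⟨hYK, hKX, hK⟩, haK⟩ b hb hab
    exact ⟨insert b K, ⟨hYK.trans (Set.subset_insert _ _), Set.insert_subset hb hKX,
      hK.insert_of_adj ⟨a, haK, hab.symm⟩⟩, Set.mem_insert _ _⟩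

lemma PreconnectedOn.touches_or_exists_link {D I J : Set V} (hD : PreconnectedOn G D)
    (hID : I ⊆ D) (hJD : J ⊆ D) (hI : I.Nonempty) (hJ : J.Nonempty) (hIJ : Disjoint I J) :
    Touches G I J ∨ ∃ L ⊆ D \ (I ∪ J), PreconnectedOn G L ∧ Touches G I L ∧ Touches G L J := by
  by_contra! hno
  obtain ⟨hIJ', hno⟩ := hno
  obtain ⟨a, ha⟩ := hI
  obtain ⟨b, hb⟩ := hJ
  suffices hsub : D ⊆ I ∪ ⋃₀ {L | L ⊆ D \ (I ∪ J) ∧ PreconnectedOn G L ∧ Touches G I L} by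
    rcases hsub (hJD hb) with hbI | ⟨L, ⟨hL, -⟩, hbL⟩
    · exact Set.disjoint_left.1 hIJ hbI hb
    · exact (hL hbL).2 (.inr hb)
  refine preconnectedOn_iff.1 hD _ ⟨a, hID ha, .inl ha⟩ ?_
  rintro c ⟨-, hc⟩ d hdD hcd
  by_cases hdI : d ∈ I
  · exact .inl hdI
  rcases hc with hcI | ⟨L, ⟨hLD, hL, hIL⟩, hcL⟩
  · have hdJ : d ∉ J := fun hdJ => hIJ' ⟨c, hcI, d, hdJ, hcd⟩
    refine .inr ⟨{d}, ⟨?_, preconnectedOn_singleton d, c, hcI, d, rfl, hcd⟩, rfl⟩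
    simp [hdD, hdI, hdJ]
  · have hdJ : d ∉ J := fun hdJ => hno L hLD hL hIL ⟨c, hcL, d, hdJ, hcd⟩
    refine .inr ⟨insert d L, ⟨Set.insert_subset ?_ hLD, hL.insert_of_adj ⟨c, hcL, hcd.symm⟩,
      hIL.mono subset_rfl (Set.subset_insert _ _)⟩, Set.mem_insert _ _⟩
    simp [hdD, hdI, hdJ]

end Connectivity

/-! ### Potentials of edge signings -/

section Potentials

variable {V : Type*} {G : SimpleGraph V} {g : Sym2 V → ZMod 2} {X Y : Set V} {p q : V → ZMod 2}

/-- The vertex labelling `p` is a potential on `X` for the edge signing `g`: over the two-element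
field, the sign of each edge of `G[X]` is the difference of the labels of its ends. -/
def IsPotential (G : SimpleGraph V) (g : Sym2 V → ZMod 2) (X : Set V) (p : V → ZMod 2) : Prop :=
  ∀ a ∈ X, ∀ b ∈ X, G.Adj a b → g s(a, b) = p a + p b

/-- The signing `g` is balanced on `X`: it is a coboundary on `G[X]`. -/
def BalancedOn (G : SimpleGraph V) (g : Sym2 V → ZMod 2) (X : Set V) : Prop :=
  ∃ p, IsPotential G g X p

lemma IsPotential.mono (h : IsPotential G g X p) (hYX : Y ⊆ X) : IsPotential G g Y p :=
  fun a ha b hb => h a (hYX ha) b (hYX hb)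

lemma BalancedOn.mono (h : BalancedOn G g X) (hYX : Y ⊆ X) : BalancedOn G g Y :=
  let ⟨p, hp⟩ := h
  ⟨p, hp.mono hYX⟩

lemma IsPotential.congr (h : IsPotential G g X p) (hpq : Set.EqOn p q X) : IsPotential G g X q :=
  fun a ha b hb hab => by rw [← hpq ha, ← hpq hb, h a ha b hb hab]

lemma IsPotential.add_const (h : IsPotential G g X p) (c : ZMod 2) :
    IsPotential G g X fun v => p v + c :=
  fun a ha b hb hab => by
    linear_combination h a ha b hb hab - CharTwo.add_self_eq_zero c

lemma BalancedOn.exists_isPotential_eq (h : BalancedOn G g X) (a : V) (c : ZMod 2) :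
    ∃ p, IsPotential G g X p ∧ p a = c :=
  let ⟨p, hp⟩ := h
  ⟨_, hp.add_const (c - p a), by ring⟩

lemma IsPotential.eqOn (hp : IsPotential G g X p) (hq : IsPotential G g X q)
    (hX : PreconnectedOn G X) {a : V} (ha : a ∈ X) (hpq : p a = q a) : Set.EqOn p q X :=
  preconnectedOn_iff.1 hX {v | p v = q v} ⟨a, ha, hpq⟩ fun c ⟨hc, hpqc⟩ d hd hcd =>
    add_left_cancel <| (hp c hc d hd hcd).symm.trans <|
      (hq c hc d hd hcd).trans (congrArg (· + q d) (Eq.symm hpqc))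

lemma IsPotential.update_of_notMem [DecidableEq V] (h : IsPotential G g X p) {a : V} (ha : a ∉ X)
    (c : ZMod 2) : IsPotential G g X (Function.update p a c) :=
  h.congr fun _ hv => (Function.update_of_ne (ne_of_mem_of_not_mem hv ha) _ _).symm

lemma BalancedOn.union (hX : BalancedOn G g X) (hY : BalancedOn G g Y)
    (hXY : PreconnectedOn G (X ∩ Y)) (hno : ¬ Touches G (X \ Y) (Y \ X)) :
    BalancedOn G g (X ∪ Y) := by
  classical
  obtain ⟨p, hp⟩ := hX
  obtain ⟨q, hq, hpq⟩ : ∃ q, IsPotential G g Y q ∧ Set.EqOn p q (X ∩ Y) := by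
    rcases (X ∩ Y).eq_empty_or_nonempty with h | ⟨r, hr⟩
    · obtain ⟨q, hq⟩ := hY
      exact ⟨q, hq, h ▸ Set.eqOn_empty _ _⟩
    · obtain ⟨q, hq, hqr⟩ := hY.exists_isPotential_eq r (p r)
      exact ⟨q, hq, (hp.mono Set.inter_subset_left).eqOn (hq.mono Set.inter_subset_right)
        hXY hr hqr.symm⟩
  have hpX : IsPotential G g X (X.piecewise p q) :=
    hp.congr (Set.piecewise_eqOn X p q).symm
  have hqY : IsPotential G g Y (X.piecewise p q) := hq.congr fun v hv => by
    by_cases hvX : v ∈ X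
    · rw [Set.piecewise_eq_of_mem _ _ _ hvX, hpq ⟨hvX, hv⟩]
    · rw [Set.piecewise_eq_of_notMem _ _ _ hvX]
  refine ⟨X.piecewise p q, fun a ha b hb hab => ?_⟩
  have hno₁ : ¬ (a ∈ X \ Y ∧ b ∈ Y \ X) := fun h => hno ⟨a, h.1, b, h.2, hab⟩
  have hno₂ : ¬ (b ∈ X \ Y ∧ a ∈ Y \ X) := fun h => hno ⟨b, h.1, a, h.2, hab.symm⟩
  by_cases h : a ∈ X ∧ b ∈ X
  · exact hpX a h.1 b h.2 hab
  · refine hqY a ?_ b ?_ hab <;> grind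

lemma BalancedOn.insert_of_subsingleton (h : BalancedOn G g X) {a : V}
    (ha : (G.neighborSet a ∩ X).Subsingleton) : BalancedOn G g (insert a X) := by
  classical
  by_cases haX : a ∈ X
  · rwa [Set.insert_eq_of_mem haX]
  have hstar : BalancedOn G g (insert a (G.neighborSet a ∩ X)) := by
    refine ⟨fun v => if v = a then 0 else g s(a, v), ?_⟩
    rintro b (rfl | hb) c (rfl | hc) hbc
    · exact absurd rfl hbc.ne
    · simp [hbc.ne']
    · simp [hbc.ne, Sym2.eq_swap]
    · exact absurd (ha hb hc) hbc.ne
  have hU : insert a (G.neighborSet a ∩ X) ∪ X = insert a X := by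
    rw [Set.insert_union, Set.union_eq_right.2 Set.inter_subset_right]
  rw [← hU]
  refine hstar.union h (preconnectedOn_of_subsingleton (ha.anti ?_)) ?_
  · rintro b ⟨rfl | hb, hbX⟩
    exacts [absurd hbX haX, hb]
  · rintro ⟨b, ⟨rfl | hb, hbX⟩, c, ⟨hcX, hc⟩, hbc⟩
    · exact hc (.inr ⟨hbc, hcX⟩)
    · exact hbX hb.2

/- The potential on all of `X` is the majority vote of the three given ones. -/
lemma BalancedOn.of_three_potentials {b b₁ b₂ : V} {q₁ q₂ : V → ZMod 2}
    (h₁ : b₁ ≠ b) (h₂ : b₂ ≠ b) (h₁₂ : b₁ ≠ b₂)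
    (hp : IsPotential G g (X \ {b}) p) (hq₁ : IsPotential G g (X \ {b₁}) q₁)
    (hq₂ : IsPotential G g (X \ {b₂}) q₂)
    (e : q₁ b = q₂ b) (e₁ : p b₁ = q₂ b₁) (e₂ : p b₂ = q₁ b₂) : BalancedOn G g X := by
  classical
  obtain ⟨maj, hmaj, hmaj₁, hmaj₂, hmaj_add⟩ : ∃ maj : ZMod 2 → ZMod 2 → ZMod 2 → ZMod 2,
      (∀ s t, maj t s s = s) ∧ (∀ s t, maj s t s = s) ∧ (∀ s t, maj s s t = s) ∧
      ∀ c s s₁ s₂, maj (c + s) (c + s₁) (c + s₂) = c + maj s s₁ s₂ :=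
    ⟨fun s s₁ s₂ => s * s₁ + s₁ * s₂ + s₂ * s, by decide⟩
  have hagree : ∀ v, v = b ∨ v = b₁ ∨ v = b₂ →
      Function.update q₁ b₁ (p b₁) v = Function.update p b (q₁ b) v ∧
      Function.update q₂ b₂ (p b₂) v = Function.update p b (q₁ b) v := by
    grind [Function.update_apply]
  replace hp := hp.update_of_notMem (a := b) (by simp) (q₁ b)
  replace hq₁ := hq₁.update_of_notMem (a := b₁) (by simp) (p b₁)
  replace hq₂ := hq₂.update_of_notMem (a := b₂) (by simp) (p b₂)
  generalize Function.update p b (q₁ b) = p' at *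
  generalize Function.update q₁ b₁ (p b₁) = q₁' at *
  generalize Function.update q₂ b₂ (p b₂) = q₂' at *
  refine ⟨fun v => maj (p' v) (q₁' v) (q₂' v), fun x hx y hy hxy => ?_⟩
  have hflip : ∀ c s t : ZMod 2, c = s + t ↔ t = c + s := by decide
  have hval : ∀ z r, IsPotential G g (X \ {z}) r → x ≠ z → y ≠ z → r y = g s(x, y) + r x :=
    fun z r hr hxz hyz => (hflip _ _ _).1 (hr x ⟨hx, hxz⟩ y ⟨hy, hyz⟩ hxy)
  have hx' := hagree x
  have hy' := hagree y
  have := hval b p' hp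
  have := hval b₁ q₁' hq₁
  have := hval b₂ q₂' hq₂
  rw [hflip, ← hmaj_add]
  generalize g s(x, y) = c at *
  clear hflip hmaj_add
  by_cases hx : x = b ∨ x = b₁ ∨ x = b₂ <;> by_cases hy : y = b ∨ y = b₁ ∨ y = b₂ <;> grind

lemma BalancedOn.of_three_preconnectedOn {b b₁ b₂ k : V} {C C₁ C₂ : Set V}
    (h₁ : b₁ ≠ b) (h₂ : b₂ ≠ b) (h₁₂ : b₁ ≠ b₂)
    (hb : BalancedOn G g (X \ {b})) (hb₁ : BalancedOn G g (X \ {b₁}))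
    (hb₂ : BalancedOn G g (X \ {b₂}))
    (hC : PreconnectedOn G C) (hC₁ : PreconnectedOn G C₁) (hC₂ : PreconnectedOn G C₂)
    (hCX : C ⊆ X \ {b₁, b₂}) (hCX₁ : C₁ ⊆ X \ {b, b₂}) (hCX₂ : C₂ ⊆ X \ {b, b₁})
    (hkb : {k, b} ⊆ C) (hkb₁ : {k, b₁} ⊆ C₁) (hkb₂ : {k, b₂} ⊆ C₂) :
    BalancedOn G g X := by
  obtain ⟨p, hp, hpk⟩ := hb.exists_isPotential_eq k 0
  obtain ⟨q₁, hq₁, hqk₁⟩ := hb₁.exists_isPotential_eq k 0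
  obtain ⟨q₂, hq₂, hqk₂⟩ := hb₂.exists_isPotential_eq k 0
  simp only [Set.insert_subset_iff, Set.singleton_subset_iff] at hkb hkb₁ hkb₂
  have hmono : ∀ {D : Set V} {c d : V}, D ⊆ X \ {c, d} → D ⊆ X \ {c} ∧ D ⊆ X \ {d} :=
    fun hD => ⟨hD.trans (Set.sdiff_subset_sdiff_right (by simp)),
      hD.trans (Set.sdiff_subset_sdiff_right (by simp))⟩
  refine BalancedOn.of_three_potentials h₁ h₂ h₁₂ hp hq₁ hq₂ ?_ ?_ ?_
  · exact (hq₁.mono (hmono hCX).1).eqOn (hq₂.mono (hmono hCX).2) hC hkb.1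
      (hqk₁.trans hqk₂.symm) hkb.2
  · exact (hp.mono (hmono hCX₁).1).eqOn (hq₂.mono (hmono hCX₁).2) hC₁ hkb₁.1
      (hpk.trans hqk₂.symm) hkb₁.2
  · exact (hp.mono (hmono hCX₂).1).eqOn (hq₁.mono (hmono hCX₂).2) hC₂ hkb₂.1
      (hpk.trans hqk₁.symm) hkb₂.2

end Potentials

/-! ### The cycle space -/

section CycleSpace

variable {V : Type*} [Fintype V] {G : SimpleGraph V} {A : Set V} {z g : Sym2 V → ZMod 2}

/-- The cycle space over the two-element field of the subgraph of `G` induced by `A`: edge vectors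
supported on that subgraph with zero boundary. Vectors are indexed by all unordered pairs, so that
the cycle spaces of different graphs on `V` live in one ambient space. -/
def cycleSpace (G : SimpleGraph V) (A : Set V) : Submodule (ZMod 2) (Sym2 V → ZMod 2) where
  carrier := {z | (∀ a b, z s(a, b) ≠ 0 → G.Adj a b ∧ a ∈ A ∧ b ∈ A) ∧ ∀ v, ∑ w, z s(v, w) = 0}
  add_mem' := by
    rintro x y ⟨hx, hx'⟩ ⟨hy, hy'⟩
    refine ⟨fun a b h => ?_, fun v => ?_⟩
    · by_cases h0 : x s(a, b) = 0
      · exact hy a b fun h1 => h (by rw [Pi.add_apply, h0, h1, add_zero])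
      · exact hx a b h0
    · simp only [Pi.add_apply, Finset.sum_add_distrib, hx', hy', add_zero]
  zero_mem' := ⟨fun _ _ h => absurd rfl h, fun _ => by simp⟩
  smul_mem' := by
    rintro c x ⟨hx, hx'⟩
    refine ⟨fun a b h => hx a b fun h0 => h (by rw [Pi.smul_apply, h0, smul_zero]), fun v => ?_⟩
    simp only [Pi.smul_apply, ← Finset.smul_sum, hx', smul_zero]

lemma adj_of_mem_cycleSpace (hz : z ∈ cycleSpace G A) {a b : V} (h : z s(a, b) ≠ 0) :
    G.Adj a b ∧ a ∈ A ∧ b ∈ A :=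
  hz.1 a b h

lemma mem_cycleSpace_of_adj {G' : SimpleGraph V} {A' : Set V} (hz : z ∈ cycleSpace G A)
    (h : ∀ a b, z s(a, b) ≠ 0 → G'.Adj a b ∧ a ∈ A' ∧ b ∈ A') : z ∈ cycleSpace G' A' :=
  ⟨h, hz.2⟩

open scoped Classical in
lemma dotProduct_eq_zero_of_balancedOn (hz : z ∈ cycleSpace G A) (hg : BalancedOn G g A) :
    z ⬝ᵥ g = 0 := by
  obtain ⟨p, hp⟩ := hg
  have hfiber : ∀ e, z e * g e = ∑ x : V × V with s(x.1, x.2) = e, z s(x.1, x.2) * p x.1 := by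
    refine Sym2.ind fun a b => ?_
    by_cases h0 : z s(a, b) = 0
    · rw [h0, zero_mul, Finset.sum_eq_zero]
      intro x hx
      rw [(Finset.mem_filter.1 hx).2, h0, zero_mul]
    · obtain ⟨hab, ha, hb⟩ := hz.1 a b h0
      have : ({x : V × V | s(x.1, x.2) = s(a, b)} : Finset (V × V)) = {(a, b), (b, a)} := by
        ext ⟨c, d⟩
        simp
      rw [this, Finset.sum_pair (by simp [hab.ne]), Sym2.eq_swap (a := b), hp a ha b hb hab,
        mul_add]
  calc z ⬝ᵥ g = ∑ x : V × V, z s(x.1, x.2) * p x.1 := by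
        rw [← Finset.sum_fiberwise Finset.univ fun x : V × V => s(x.1, x.2)]
        exact Finset.sum_congr rfl fun e _ => hfiber e
    _ = ∑ v, (∑ w, z s(v, w)) * p v := by simp only [Fintype.sum_prod_type, Finset.sum_mul]
    _ = 0 := by simp only [hz.2, zero_mul, Finset.sum_const_zero]

open scoped Classical in
/- A bridge of the support would be a cut, hence orthogonal to the vector. -/
lemma exists_isCycle_of_mem_cycleSpace (hz : z ∈ cycleSpace G A) (h0 : z ≠ 0) :
    ∃ (v : V) (c : G.Walk v v), c.IsCycle ∧ ∀ e ∈ c.edges, z e ≠ 0 := by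
  let H : SimpleGraph V := SimpleGraph.fromEdgeSet {e | z e ≠ 0}
  have hadj : ∀ {a b}, H.Adj a b ↔ z s(a, b) ≠ 0 := fun {a b} =>
    (fromEdgeSet_adj _).trans ⟨And.left, fun h => ⟨h, (hz.1 a b h).1.ne⟩⟩
  have hle : H ≤ G := fun a b hab => (hz.1 a b (hadj.1 hab)).1
  have hcyc : ¬ H.IsAcyclic := fun hac => by
    obtain ⟨e, he⟩ := Function.ne_iff.1 h0
    induction e using Sym2.ind with | _ a b
    have hbridge := isAcyclic_iff_forall_adj_isBridge.1 hac (hadj.2 he)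
    rw [isBridge_iff] at hbridge
    have hcut : BalancedOn H (Pi.single s(a, b) 1) Set.univ := by
      refine ⟨fun v => if (H.deleteEdges {s(a, b)}).Reachable a v then 1 else 0,
        fun x _ y _ hxy => ?_⟩
      by_cases hxe : s(x, y) = s(a, b)
      · rw [hxe, Pi.single_eq_same]
        rcases Sym2.eq_iff.1 hxe with ⟨rfl, rfl⟩ | ⟨rfl, rfl⟩ <;> simp [hbridge]
      · have hxy' : (H.deleteEdges {s(a, b)}).Adj x y := deleteEdges_adj.2 ⟨hxy, hxe⟩
        have : (H.deleteEdges {s(a, b)}).Reachable a x ↔ (H.deleteEdges {s(a, b)}).Reachable a y :=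
          ⟨fun h => h.trans hxy'.reachable, fun h => h.trans hxy'.symm.reachable⟩
        simp only [Pi.single_eq_of_ne hxe, this, CharTwo.add_self_eq_zero]
    have hz' : z ∈ cycleSpace H Set.univ :=
      mem_cycleSpace_of_adj hz fun _ _ h => ⟨hadj.2 h, trivial, trivial⟩
    have := dotProduct_eq_zero_of_balancedOn hz' hcut
    rw [dotProduct_single_one] at this
    exact he this
  obtain ⟨v, c, hc⟩ : ∃ (v : V) (c : H.Walk v v), c.IsCycle := by
    simpa only [SimpleGraph.IsAcyclic, not_forall, not_not] using hcyc
  refine ⟨v, c.mapLe hle, hc.mapLe hle, Sym2.ind fun a b hab => ?_⟩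
  rw [Walk.edges_mapLe_eq_edges] at hab
  exact hadj.1 (c.edges_subset_edgeSet hab)

end CycleSpace

/-! ### Induced cycles -/

section InducedCycles

variable {V : Type*} {G : SimpleGraph V} {g : Sym2 V → ZMod 2} {A C X Y : Set V}
  {a b p q : V}

/-- The subgraph of `G` induced by `X` is a cycle, that is, connected and two-regular. -/
structure IsInducedCycle (G : SimpleGraph V) (X : Set V) : Prop where
  nonempty : X.Nonempty
  preconnectedOn : PreconnectedOn G X
  ncard_neighbors : ∀ a ∈ X, (G.neighborSet a ∩ X).ncard = 2

lemma IsPotential.balancedOn_of_discrepancy_eq {f : V → ZMod 2} (hf : IsPotential G g (X \ {b}) f)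
    (hp : BalancedOn G g (X \ {p})) (hq : BalancedOn G g (X \ {q})) (hpq : p ≠ q)
    (hbX : b ∈ X) (hpX : p ∈ X) (hqX : q ∈ X) (hbp : G.Adj b p) (hbq : G.Adj b q)
    (h : g s(b, p) + f p = g s(b, q) + f q) : BalancedOn G g X := by
  obtain ⟨f₁, hf₁, hf₁b⟩ := hp.exists_isPotential_eq b (g s(b, p) + f p)
  obtain ⟨f₂, hf₂, hf₂b⟩ := hq.exists_isPotential_eq b (g s(b, p) + f p)
  have hp₂ := hf₂ b ⟨hbX, hbq.ne⟩ p ⟨hpX, hpq⟩ hbp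
  have hq₁ := hf₁ b ⟨hbX, hbp.ne⟩ q ⟨hqX, hpq.symm⟩ hbq
  have hcancel : ∀ c s t : ZMod 2, c = c + s + t → s = t := by decide
  refine .of_three_potentials hbp.ne' hbq.ne' hpq hf hf₁ hf₂ (hf₁b.trans hf₂b.symm) ?_ ?_
  · exact hcancel _ _ _ (hf₂b ▸ hp₂)
  · exact hcancel _ _ _ (h ▸ hf₁b ▸ hq₁)

lemma isInducedCycle_of_minimal (hX : ¬ BalancedOn G g X)
    (hmin : ∀ b ∈ X, BalancedOn G g (X \ {b})) : IsInducedCycle G X := by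
  refine ⟨?_, preconnectedOn_iff.2 fun S ⟨c, hcX, hcS⟩ hS => ?_, fun a ha => ?_⟩
  · rw [Set.nonempty_iff_ne_empty]
    rintro rfl
    exact hX ⟨0, by simp [IsPotential]⟩
  · intro d hdX
    by_contra hdS
    refine hX ?_
    rw [← Set.inter_union_sdiff X S]
    refine ((hmin d hdX).mono ?_).union ((hmin c hcX).mono ?_) ?_ ?_
    · exact fun v hv => ⟨hv.1, ne_of_mem_of_not_mem hv.2 hdS⟩
    · exact fun v hv => ⟨hv.1, fun h => hv.2 (h ▸ hcS)⟩
    · exact preconnectedOn_of_subsingleton (by grind [Set.Subsingleton])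
    · rintro ⟨x, hx, y, hy, hxy⟩
      exact hy.1.2 (hS x hx.1 y hy.1.1 hxy)
  · obtain ⟨f, hf⟩ := hmin a ha
    have hinj : Set.InjOn (fun c => g s(a, c) + f c) (G.neighborSet a ∩ X) := by
      intro p hp q hq hpq
      by_contra hne
      exact hX (hf.balancedOn_of_discrepancy_eq (hmin p hp.2) (hmin q hq.2) hne ha hp.2 hq.2
        hp.1 hq.1 hpq)
    have hfin : (G.neighborSet a ∩ X).Finite :=
      Set.Finite.of_injOn (Set.mapsTo_univ _ _) hinj Set.finite_univ
    refine le_antisymm ?_ ((Set.one_lt_ncard_iff_nontrivial_and_finite).2 ⟨?_, hfin⟩)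
    · simpa using Set.ncard_le_ncard_of_injOn _ (fun _ _ => Set.mem_univ _) hinj Set.finite_univ
    · rw [← Set.not_subsingleton_iff]
      intro hsub
      refine hX ?_
      rw [← Set.insert_sdiff_self_of_mem ha]
      exact (hmin a ha).insert_of_subsingleton
        (hsub.anti (Set.inter_subset_inter_right _ Set.sdiff_subset))

lemma exists_isInducedCycle_of_not_balancedOn [Finite V] (h : ¬ BalancedOn G g A) :
    ∃ X ⊆ A, IsInducedCycle G X ∧ ¬ BalancedOn G g X := by
  obtain ⟨X, hXA, hX⟩ := exists_minimal_le_of_wellFoundedLT (fun X => ¬ BalancedOn G g X) A h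
  refine ⟨X, hXA, isInducedCycle_of_minimal hX.prop fun b hb => ?_, hX.prop⟩
  by_contra hbal
  exact (hX.le_of_le hbal Set.sdiff_subset hb).2 rfl

lemma IsInducedCycle.exists_adj_ne (hX : IsInducedCycle G X) (ha : a ∈ X) (b : V) :
    ∃ c ∈ X, c ≠ b ∧ G.Adj a c := by
  obtain ⟨c, d, hcd, hN⟩ := Set.ncard_eq_two.1 (hX.ncard_neighbors a ha)
  have hc : c ∈ G.neighborSet a ∩ X := hN ▸ Set.mem_insert c _
  have hd : d ∈ G.neighborSet a ∩ X := hN ▸ Set.mem_insert_of_mem _ rfl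
  by_cases hcb : c = b
  · exact ⟨d, hd.2, fun h => hcd (hcb.trans h.symm), hd.1⟩
  · exact ⟨c, hc.2, hcb, hc.1⟩

lemma IsInducedCycle.eq_of_subset (hX : IsInducedCycle G X) (hY : IsInducedCycle G Y)
    (hYX : Y ⊆ X) : Y = X := by
  refine hYX.antisymm (preconnectedOn_iff.1 hX.preconnectedOn Y ?_ fun a ha b hb hab => ?_)
  · rw [Set.inter_eq_right.2 hYX]
    exact hY.nonempty
  · have hfin : (G.neighborSet a ∩ X).Finite :=
      Set.finite_of_ncard_pos (by simp [hX.ncard_neighbors a ha.1])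
    have := Set.eq_of_subset_of_ncard_le (Set.inter_subset_inter_right (G.neighborSet a) hYX)
      (by rw [hX.ncard_neighbors a ha.1, hY.ncard_neighbors a ha.2]) hfin
    exact (this.symm ▸ (⟨hab, hb⟩ : b ∈ G.neighborSet a ∩ X) : b ∈ G.neighborSet a ∩ Y).2

lemma IsInducedCycle.balancedOn_of_ssubset [Finite V] (hX : IsInducedCycle G X) (hYX : Y ⊂ X) :
    BalancedOn G g Y := by
  by_contra h
  obtain ⟨Z, hZY, hZ, -⟩ := exists_isInducedCycle_of_not_balancedOn h
  exact hYX.not_subset (hX.eq_of_subset hZ (hZY.trans hYX.subset) ▸ hZY)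

/-- The edge vector of the subgraph of `G` induced by `X`; it is used for induced cycles. -/
noncomputable def cycleVector (G : SimpleGraph V) (X : Set V) : Sym2 V → ZMod 2 :=
  {e | e ∈ G.edgeSet ∧ (e : Set V) ⊆ X}.indicator 1

lemma cycleVector_of_adj (h : G.Adj a b) (ha : a ∈ X) (hb : b ∈ X) :
    cycleVector G X s(a, b) = 1 :=
  Set.indicator_of_mem (by simpa [Set.insert_subset_iff] using ⟨h, ha, hb⟩) _

lemma adj_of_cycleVector_ne_zero (h : cycleVector G X s(a, b) ≠ 0) :
    G.Adj a b ∧ a ∈ X ∧ b ∈ X := by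
  simpa [Set.insert_subset_iff] using Set.mem_of_indicator_ne_zero h

lemma IsInducedCycle.cycleVector_mem_cycleSpace [Fintype V] (hX : IsInducedCycle G X)
    (hXA : X ⊆ A) : cycleVector G X ∈ cycleSpace G A := by
  refine ⟨fun a b h => ?_, fun v => ?_⟩
  · obtain ⟨hab, ha, hb⟩ := adj_of_cycleVector_ne_zero h
    exact ⟨hab, hXA ha, hXA hb⟩
  · by_cases hv : v ∈ X
    · obtain ⟨c, d, hcd, hN⟩ := Set.ncard_eq_two.1 (hX.ncard_neighbors v hv)
      have hc : c ∈ G.neighborSet v ∩ X := hN ▸ Set.mem_insert c _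
      have hd : d ∈ G.neighborSet v ∩ X := hN ▸ Set.mem_insert_of_mem _ rfl
      rw [Fintype.sum_eq_add c d hcd, cycleVector_of_adj hc.1 hv hc.2,
        cycleVector_of_adj hd.1 hv hd.2, CharTwo.add_self_eq_zero]
      rintro w hw
      by_contra h0
      obtain ⟨hvw, -, hwX⟩ := adj_of_cycleVector_ne_zero h0
      have : w ∈ G.neighborSet v ∩ X := ⟨hvw, hwX⟩
      simp [hN, hw] at this
    · refine Finset.sum_eq_zero fun w _ => ?_
      by_contra h0
      exact hv (adj_of_cycleVector_ne_zero h0).2.1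

/- If `f` is a potential away from one vertex `r`, extended so as to fit one edge at `r`, then the
pairing with the cycle vector measures the failure of `f` at the other edge at `r`. -/
lemma IsInducedCycle.balancedOn_of_dotProduct_eq_zero [Fintype V] (hX : IsInducedCycle G X)
    (h : cycleVector G X ⬝ᵥ g = 0) : BalancedOn G g X := by
  classical
  obtain ⟨r, hr⟩ := hX.nonempty
  obtain ⟨b, c, hbc, hN⟩ := Set.ncard_eq_two.1 (hX.ncard_neighbors r hr)
  have hb : b ∈ G.neighborSet r ∩ X := hN ▸ Set.mem_insert b _
  have hc : c ∈ G.neighborSet r ∩ X := hN ▸ Set.mem_insert_of_mem _ rfl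
  obtain ⟨f, hf⟩ := hX.balancedOn_of_ssubset (g := g) (Set.sdiff_singleton_ssubset.2 hr)
  replace hf := hf.update_of_notMem (a := r) (by simp) (g s(r, c) + f c)
  have hrc : g s(r, c) = Function.update f r (g s(r, c) + f c) r +
      Function.update f r (g s(r, c) + f c) c := by
    rw [Function.update_self, Function.update_of_ne hc.1.ne', add_assoc, CharTwo.add_self_eq_zero,
      add_zero]
  generalize Function.update f r (g s(r, c) + f c) = f at hf hrc
  have hpot : IsPotential G (g + Pi.single s(r, b) (g s(r, b) + f r + f b)) X f := by
    have hstar : ∀ d ∈ X, G.Adj r d →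
        (g + Pi.single s(r, b) (g s(r, b) + f r + f b) : Sym2 V → ZMod 2) s(r, d) = f r + f d := by
      intro d hd hrd
      have : d ∈ ({b, c} : Set V) := hN ▸ ⟨hrd, hd⟩
      rcases this with rfl | rfl
      · rw [Pi.add_apply, Pi.single_eq_same]
        linear_combination CharTwo.add_self_eq_zero (g s(r, d))
      · rw [Pi.add_apply, Pi.single_eq_of_ne (by simp [hbc.symm, hc.1.ne']), add_zero, hrc]
    intro x hx y hy hxy
    by_cases hxr : x = r
    · subst hxr
      exact hstar y hy hxy
    by_cases hyr : y = r
    · subst hyr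
      rw [Sym2.eq_swap (a := x), hstar x hx hxy.symm, add_comm]
    · rw [Pi.add_apply, Pi.single_eq_of_ne (by simp [hxr, hyr]), add_zero]
      exact hf x ⟨hx, hxr⟩ y ⟨hy, hyr⟩ hxy
  have h0 := dotProduct_eq_zero_of_balancedOn (hX.cycleVector_mem_cycleSpace subset_rfl) ⟨f, hpot⟩
  rw [dotProduct_add, h, dotProduct_single, cycleVector_of_adj hb.1 hr hb.2, one_mul,
    zero_add] at h0
  rw [h0, Pi.single_zero, add_zero] at hpot
  exact ⟨f, hpot⟩

/-- `I` and `J` are the interiors of the two arcs into which `p` and `q` cut the cycle `X`. -/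
structure ArcDecomposition (G : SimpleGraph V) (X : Set V) (p q : V) (I J : Set V) : Prop where
  preconnectedOn_left : PreconnectedOn G I
  preconnectedOn_right : PreconnectedOn G J
  disjoint : Disjoint I J
  not_touches : ¬ Touches G I J
  eq_union : X = {p, q} ∪ (I ∪ J)
  left_notMem : p ∉ I ∪ J
  right_notMem : q ∉ I ∪ J
  touches_left : Touches G {p} I ∧ Touches G {q} I
  touches_right : Touches G {p} J ∧ Touches G {q} J

variable [Finite V]

lemma IsInducedCycle.not_balancedOn_single [DecidableEq V] (hX : IsInducedCycle G X)
    (hab : G.Adj a b) (ha : a ∈ X) (hb : b ∈ X) : ¬ BalancedOn G (Pi.single s(a, b) 1) X := by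
  have := Fintype.ofFinite V
  intro h
  have h0 := dotProduct_eq_zero_of_balancedOn (hX.cycleVector_mem_cycleSpace subset_rfl) h
  rw [dotProduct_single_one, cycleVector_of_adj hab ha hb] at h0
  exact one_ne_zero h0

lemma IsInducedCycle.exists_not_balancedOn (hX : IsInducedCycle G X) :
    ∃ g, ¬ BalancedOn G g X := by
  classical
  obtain ⟨r, hr⟩ := hX.nonempty
  obtain ⟨b, hb, -, hrb⟩ := hX.exists_adj_ne hr r
  exact ⟨_, hX.not_balancedOn_single hrb hr hb⟩

lemma IsInducedCycle.preconnectedOn_diff (hX : IsInducedCycle G X) (hC : PreconnectedOn G C)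
    (hCX : C ⊆ X) : PreconnectedOn G (X \ C) := by
  refine preconnectedOn_iff.2 fun S ⟨c, hc, hcS⟩ hS d hd => ?_
  by_contra hdS
  obtain ⟨g, hg⟩ := hX.exists_not_balancedOn
  have h₁ : BalancedOn G g (C ∪ (X \ C) ∩ S) :=
    hX.balancedOn_of_ssubset ⟨by grind, fun h => by grind [h hd.1]⟩
  have h₂ : BalancedOn G g (C ∪ (X \ C) \ S) :=
    hX.balancedOn_of_ssubset ⟨by grind, fun h => by grind [h hc.1]⟩
  have hinter : (C ∪ (X \ C) ∩ S) ∩ (C ∪ (X \ C) \ S) = C := by grind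
  have hunion : (C ∪ (X \ C) ∩ S) ∪ (C ∪ (X \ C) \ S) = X := by grind
  refine hg (hunion ▸ h₁.union h₂ (hinter.symm ▸ hC) ?_)
  rintro ⟨x, hx, y, hy, hxy⟩
  have := hS x (by grind) y (by grind) hxy
  grind

lemma IsInducedCycle.eq_of_chord (hX : IsInducedCycle G X) (hC : PreconnectedOn G C)
    (hCX : C ⊆ X) (hp : p ∈ X) (hq : q ∈ X) (hpC : p ∉ C) (hqC : q ∉ C) (hpq : G.Adj p q)
    (hpt : ∃ c ∈ C, G.Adj p c) (hqt : ∃ c ∈ C, G.Adj q c) : X = C ∪ {p, q} := by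
  classical
  by_contra hne
  obtain ⟨f, hf⟩ := hX.balancedOn_of_ssubset (g := Pi.single s(p, q) 1) (Y := C ∪ {p, q})
    (LE.le.ssubset_of_ne (by grind) (Ne.symm hne))
  obtain ⟨c, hc, hpc⟩ := hpt
  obtain ⟨d, hd, hqd⟩ := hqt
  have hzero : ∀ x ∈ C ∪ {p, q}, ∀ y ∈ C, G.Adj x y → f x = f y := by
    intro x hx y hy hxy
    have h0 := hf x hx y (.inl hy) hxy
    rw [Pi.single_eq_of_ne (by grind)] at h0
    exact CharTwo.add_eq_zero.1 h0.symm
  have hconst : C ⊆ {v | f v = f c} :=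
    preconnectedOn_iff.1 hC _ ⟨c, hc, rfl⟩ fun x hx y hy hxy =>
      (hzero x (.inl hx.1) y hy hxy).symm.trans hx.2
  have hpq' := hf p (by simp) q (by simp) hpq
  rw [Pi.single_eq_same, hzero p (by simp) c hc hpc, hzero q (by simp) d hd hqd, hconst hd,
    CharTwo.add_self_eq_zero] at hpq'
  exact one_ne_zero hpq'

lemma IsInducedCycle.exists_two_attachments (hX : IsInducedCycle G X) (hC : C.Nonempty)
    (hCX : C ⊆ X) (hp : p ∈ X \ C) (hq : q ∈ X \ C) (hpq : p ≠ q) :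
    ∃ u ∈ X \ C, ∃ v ∈ X \ C, u ≠ v ∧ Touches G {u} C ∧ Touches G {v} C := by
  obtain ⟨c, hc⟩ := hC
  obtain ⟨a, ha, u, hu, hau⟩ := hX.preconnectedOn.touches_diff (S := C) ⟨c, hCX hc, hc⟩ ⟨p, hp⟩
  have hother : ((X \ {u}) \ C).Nonempty := by
    by_cases hpu : p = u
    · exact ⟨q, ⟨hq.1, fun h => hpq (hpu.trans h.symm)⟩, hq.2⟩
    · exact ⟨p, ⟨hp.1, hpu⟩, hp.2⟩
  obtain ⟨b, hb, v, hv, hbv⟩ :=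
    (hX.preconnectedOn_diff (preconnectedOn_singleton u) (by simpa using hu.1)).touches_diff
      (S := C) ⟨c, ⟨hCX hc, fun h => hu.2 (h ▸ hc)⟩, hc⟩ hother
  exact ⟨u, hu, v, ⟨hv.1.1, hv.2⟩, Ne.symm hv.1.2, ⟨u, rfl, a, ha.2, hau.symm⟩,
    ⟨v, rfl, b, hb.2, hbv.symm⟩⟩

lemma IsInducedCycle.exists_arcDecomposition (hX : IsInducedCycle G X) (hp : p ∈ X) (hq : q ∈ X)
    (hne : p ≠ q) (hpq : ¬ G.Adj p q) : ∃ I J, ArcDecomposition G X p q I J := by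
  have hpair : ¬ PreconnectedOn G {p, q} := fun h => by
    obtain ⟨x, hx, y, hy, hxy⟩ := h.touches_diff (S := {p}) ⟨p, by simp⟩ ⟨q, by simp [hne.symm]⟩
    grind
  have hne_mid : (X \ {p, q}).Nonempty := by
    rw [Set.nonempty_iff_ne_empty, Ne, Set.sdiff_eq_empty]
    exact fun h => hpair ((h.antisymm (by grind)) ▸ hX.preconnectedOn)
  obtain ⟨i, hi⟩ := hne_mid
  obtain ⟨I, hiI, hIX, hI, hIcl⟩ := (preconnectedOn_singleton (G := G) i).exists_component
    (Set.singleton_nonempty i) (Set.singleton_subset_iff.2 hi)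
  have hattach : ∀ u ∈ X \ I, Touches G {u} I → u = p ∨ u = q := by
    rintro u hu ⟨_, rfl, c, hc, huc⟩
    by_contra h
    exact hu.2 (hIcl c hc _ ⟨hu.1, h⟩ huc.symm)
  have hpqI : Touches G {p} I ∧ Touches G {q} I := by
    obtain ⟨u, hu, v, hv, huv, huI, hvI⟩ := hX.exists_two_attachments ⟨i, hiI rfl⟩
      (hIX.trans Set.sdiff_subset) ⟨hp, fun h => (hIX h).2 (by simp)⟩
      ⟨hq, fun h => (hIX h).2 (by simp)⟩ hne
    rcases hattach u hu huI with rfl | rfl <;> rcases hattach v hv hvI with rfl | rfl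
    exacts [absurd rfl huv, ⟨huI, hvI⟩, ⟨hvI, huI⟩, absurd rfl huv]
  have hcompl : PreconnectedOn G (X \ I) := hX.preconnectedOn_diff hI (hIX.trans Set.sdiff_subset)
  have hIpq : PreconnectedOn G (I ∪ {p} ∪ {q}) :=
    (hI.union_of_touches (preconnectedOn_singleton p) hpqI.1.symm).union_of_touches
      (preconnectedOn_singleton q) (hpqI.2.symm.mono Set.subset_union_left subset_rfl)
  refine ⟨I, X \ (I ∪ {p} ∪ {q}), hI, hX.preconnectedOn_diff hIpq (by grind), ?_, ?_, ?_, ?_, ?_,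
    hpqI, ?_, ?_⟩
  · exact Set.disjoint_left.2 (by grind)
  · rintro ⟨a, ha, b, hb, hab⟩
    exact hb.2 (.inl (.inl (hIcl a ha b (by grind) hab)))
  · grind
  · grind
  · grind
  · obtain ⟨x, hx, y, hy, hxy⟩ :=
      hcompl.touches_diff (S := {p}) ⟨p, by grind⟩ ⟨q, by grind⟩
    exact ⟨x, hx.2, y, by grind, hxy⟩
  · obtain ⟨x, hx, y, hy, hxy⟩ :=
      hcompl.touches_diff (S := {q}) ⟨q, by grind⟩ ⟨p, by grind⟩
    exact ⟨x, hx.2, y, by grind [SimpleGraph.adj_comm], hxy⟩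

lemma IsInducedCycle.three_le_ncard (hX : IsInducedCycle G X) : 3 ≤ X.ncard := by
  obtain ⟨a, ha⟩ := hX.nonempty
  have hsub : insert a (G.neighborSet a ∩ X) ⊆ X := Set.insert_subset ha Set.inter_subset_right
  have := Set.ncard_le_ncard hsub
  rwa [Set.ncard_insert_of_notMem fun h => G.loopless.irrefl a h.1, hX.ncard_neighbors a ha] at this

end InducedCycles

/-! ### Peripheral cycles -/

section Peripheral

variable {V : Type*} {G : SimpleGraph V} {g : Sym2 V → ZMod 2} {A K X : Set V} {a z : V}

/-- The subgraph of `G` induced by `A` is 3-connected. -/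
structure ThreeConnectedOn (G : SimpleGraph V) (A : Set V) : Prop where
  four_le_ncard : 4 ≤ A.ncard
  preconnectedOn_diff : ∀ S : Set V, S.ncard ≤ 2 → PreconnectedOn G (A \ S)

/-- `X` is a peripheral (that is, induced and nonseparating) cycle of the subgraph of `G` induced
by `A`. -/
structure IsPeripheral (G : SimpleGraph V) (A X : Set V) : Prop where
  subset : X ⊆ A
  isInducedCycle : IsInducedCycle G X
  preconnectedOn_diff : PreconnectedOn G (A \ X)

lemma ncard_pair_le (u v : V) : ({u, v} : Set V).ncard ≤ 2 :=
  (Set.ncard_insert_le u {v}).trans (by rw [Set.ncard_singleton])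

lemma ThreeConnectedOn.exists_adj_notMem [Finite V] (hA : ThreeConnectedOn G A)
    (hX : IsInducedCycle G X) (haX : a ∈ X) (haA : a ∈ A) : ∃ c ∈ A \ X, G.Adj a c := by
  have hN := hX.ncard_neighbors a haX
  have hcard : (insert a (G.neighborSet a ∩ X)).ncard < A.ncard :=
    ((Set.ncard_insert_le _ _).trans_lt (by lia)).trans_le hA.four_le_ncard
  obtain ⟨d, hdA, hd⟩ := Set.exists_mem_notMem_of_ncard_lt_ncard hcard
  rw [Set.mem_insert_iff, not_or] at hd
  obtain ⟨x, ⟨-, hx⟩, c, hc, hxc⟩ := (hA.preconnectedOn_diff _ hN.le).touches_diff (S := {a})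
    ⟨a, ⟨haA, fun h => h.1.ne rfl⟩, rfl⟩ ⟨d, ⟨hdA, hd.2⟩, hd.1⟩
  subst hx
  exact ⟨c, ⟨hc.1.1, fun hcX => hc.1.2 ⟨hxc, hcX⟩⟩, hxc⟩

lemma ThreeConnectedOn.two_lt_ncard_boundary (hA : ThreeConnectedOn G A) (hKA : K ⊆ A)
    (hK : K.Nonempty) (hz : z ∈ A) (hzK : z ∉ K) (hno : ∀ k ∈ K, ¬ G.Adj z k) :
    2 < {v ∈ A \ K | ∃ k ∈ K, G.Adj v k}.ncard := by
  by_contra! h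
  obtain ⟨k, hk⟩ := hK
  obtain ⟨x, hx, y, hy, hxy⟩ := (hA.preconnectedOn_diff _ h).touches_diff (S := K)
    ⟨k, ⟨hKA hk, fun h => h.1.2 hk⟩, hk⟩
    ⟨z, ⟨hz, fun ⟨_, k, hk, hzk⟩ => hno k hk hzk⟩, hzK⟩
  exact hy.1.2 ⟨⟨hy.1.1, hy.2⟩, x, hx.2, hxy.symm⟩

/- A largest connected set containing `z` whose complement is unbalanced is adjacent to every vertex
of its complement. -/
lemma ThreeConnectedOn.touches_of_maximal [Finite V] {B : Set V} {b : V}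
    (hA : ThreeConnectedOn G A) (hz : z ∈ B) (hB : B ⊆ A) (hunbal : ¬ BalancedOn G g (A \ B))
    (hmax : ∀ b ∈ A \ B, (∃ c ∈ B, G.Adj b c) → BalancedOn G g ((A \ B) \ {b}))
    (hb : b ∈ A \ B) : ∃ c ∈ B, G.Adj b c := by
  by_contra hno
  let L : Set V := {v ∈ A \ B | ¬ ∃ c ∈ B, G.Adj v c}
  have hbL : b ∈ L := ⟨hb, hno⟩
  obtain ⟨K, hbK, hKL, hK, hKcl⟩ := (preconnectedOn_singleton (G := G) b).exists_component
    (Set.singleton_nonempty b) (Set.singleton_subset_iff.2 hbL)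
  have hKB : K ⊆ A \ B := fun v hv => (hKL hv).1
  have hboundary : ∀ v ∈ {v ∈ A \ K | ∃ k ∈ K, G.Adj v k},
      v ∈ A \ B ∧ v ∉ K ∧ BalancedOn G g ((A \ B) \ {v}) ∧ PreconnectedOn G (insert v K) := by
    rintro v ⟨⟨hvA, hvK⟩, k, hk, hvk⟩
    have hvB : v ∈ A \ B := ⟨hvA, fun hvB => (hKL hk).2 ⟨v, hvB, hvk.symm⟩⟩
    refine ⟨hvB, hvK, hmax v hvB ?_, hK.insert_of_adj ⟨k, hk, hvk⟩⟩
    by_contra hvno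
    exact hvK (hKcl k hk v ⟨hvB, hvno⟩ hvk.symm)
  obtain ⟨b₀, h₀, b₁, h₁, b₂, h₂, h₀₁, h₀₂, h₁₂⟩ := (Set.two_lt_ncard (Set.toFinite _)).1
    (hA.two_lt_ncard_boundary (hKB.trans Set.sdiff_subset) ⟨b, hbK rfl⟩ (hB hz)
      (fun h => (hKB h).2 hz) fun k hk hzk => (hKL hk).2 ⟨z, hz, hzk.symm⟩)
  obtain ⟨m₀, n₀, l₀, c₀⟩ := hboundary b₀ h₀
  obtain ⟨m₁, n₁, l₁, c₁⟩ := hboundary b₁ h₁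
  obtain ⟨m₂, n₂, l₂, c₂⟩ := hboundary b₂ h₂
  have hsub : ∀ {v d e}, v ∈ A \ B → v ≠ d → v ≠ e → d ∉ K → e ∉ K →
      insert v K ⊆ (A \ B) \ {d, e} := fun hv hvd hve hd he =>
    Set.insert_subset ⟨hv, by simp [hvd, hve]⟩ fun x hx => ⟨hKB hx, by grind⟩
  have hpair : ∀ v, {b, v} ⊆ insert v K := fun v =>
    Set.insert_subset (.inr (hbK rfl)) (Set.singleton_subset_iff.2 (.inl rfl))
  exact hunbal (.of_three_preconnectedOn h₀₁.symm h₀₂.symm h₁₂ l₀ l₁ l₂ c₀ c₁ c₂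
    (hsub m₀ h₀₁ h₀₂ n₁ n₂) (hsub m₁ h₀₁.symm h₁₂ n₀ n₂) (hsub m₂ h₀₂.symm h₁₂.symm n₀ n₁)
    (hpair b₀) (hpair b₁) (hpair b₂))

lemma ThreeConnectedOn.exists_isPeripheral [Finite V] (hA : ThreeConnectedOn G A) (hz : z ∈ A)
    (h : ¬ BalancedOn G g (A \ {z})) : ∃ X, IsPeripheral G A X ∧ ¬ BalancedOn G g X := by
  obtain ⟨B, -, hB⟩ := exists_maximal_ge_of_wellFoundedGT
    (fun B => z ∈ B ∧ B ⊆ A ∧ PreconnectedOn G B ∧ ¬ BalancedOn G g (A \ B)) {z}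
    ⟨rfl, Set.singleton_subset_iff.2 hz, preconnectedOn_singleton z, h⟩
  obtain ⟨hzB, hBA, hBconn, hunbal⟩ := hB.prop
  have hmax : ∀ b ∈ A \ B, (∃ c ∈ B, G.Adj b c) → BalancedOn G g ((A \ B) \ {b}) := by
    intro b hb hbc
    by_contra hcon
    rw [Set.sdiff_sdiff, Set.union_singleton] at hcon
    exact hb.2 (hB.le_of_ge ⟨.inr hzB, Set.insert_subset hb.1 hBA, hBconn.insert_of_adj hbc, hcon⟩
      (Set.subset_insert b B) (Set.mem_insert b B))
  refine ⟨A \ B, ⟨Set.sdiff_subset, isInducedCycle_of_minimal hunbal fun b hb => hmax b hb ?_, ?_⟩,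
    hunbal⟩
  · exact hA.touches_of_maximal hzB hBA hunbal hmax hb
  · rwa [Set.sdiff_sdiff_cancel_left hBA]

/- Tutte: the peripheral cycles of a 3-connected graph span its cycle space. -/
lemma ThreeConnectedOn.balancedOn_of_isPeripheral [Finite V] (hA : ThreeConnectedOn G A)
    (h : ∀ X, IsPeripheral G A X → BalancedOn G g X) : BalancedOn G g A := by
  have hdel : ∀ z ∈ A, BalancedOn G g (A \ {z}) := by
    intro z hz
    by_contra hcon
    obtain ⟨X, hX, hunbal⟩ := hA.exists_isPeripheral hz hcon
    exact hunbal (h X hX)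
  have hpair : ∀ u v : V, PreconnectedOn G (A \ {u, v}) := fun u v =>
    hA.preconnectedOn_diff _ (ncard_pair_le u v)
  obtain ⟨z₀, h₀, z₁, h₁, z₂, h₂, h₀₁, h₀₂, h₁₂⟩ :=
    (Set.two_lt_ncard (Set.toFinite A)).1 (by have := hA.four_le_ncard; lia)
  obtain ⟨k, hkA, hk⟩ := Set.exists_mem_notMem_of_ncard_lt_ncard <|
    (((Set.ncard_insert_le z₀ {z₁, z₂}).trans
      (Nat.succ_le_succ (ncard_pair_le z₁ z₂))).trans_lt hA.four_le_ncard)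
  refine .of_three_preconnectedOn (k := k) h₀₁.symm h₀₂.symm h₁₂ (hdel z₀ h₀) (hdel z₁ h₁)
    (hdel z₂ h₂) (hpair z₁ z₂) (hpair z₀ z₂) (hpair z₀ z₁) subset_rfl subset_rfl subset_rfl
    ?_ ?_ ?_ <;> grind

end Peripheral

/-! ### Minors -/

section Minors

variable {V W : Type*} {G : SimpleGraph V} {H : SimpleGraph W} {A : Set V}

/-- `H` has a minor model in `G` all of whose branch sets lie in `A`. -/
def IsMinorOn (H : SimpleGraph W) (G : SimpleGraph V) (A : Set V) : Prop :=
  ∃ f : W → Set V, (∀ w, (f w).Nonempty ∧ f w ⊆ A ∧ PreconnectedOn G (f w)) ∧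
    (∀ v w, v ≠ w → Disjoint (f v) (f w)) ∧ ∀ v w, H.Adj v w → Touches G (f v) (f w)

/-- The subgraph of `G` induced by `A` satisfies Wagner's criterion for planarity. -/
def IsPlanarOn (G : SimpleGraph V) (A : Set V) : Prop :=
  ¬ IsMinorOn (completeGraph (Fin 5)) G A ∧
    ¬ IsMinorOn (completeBipartiteGraph (Fin 3) (Fin 3)) G A

lemma IsMinor.mono {G' : SimpleGraph V} (h : IsMinor H G) (hG : G ≤ G') : IsMinor H G' :=
  let ⟨f, hconn, hdisj, hadj⟩ := h
  ⟨f, fun w => (hconn w).mono (comap_monotone _ hG), hdisj, fun v w hvw =>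
    let ⟨a, ha, b, hb, hab⟩ := hadj v w hvw
    ⟨a, ha, b, hb, hG hab⟩⟩

lemma IsPlanar.anti {G' : SimpleGraph V} (h : IsPlanar G') (hG : G ≤ G') : IsPlanar G :=
  ⟨fun h' => h.1 (h'.mono hG), fun h' => h.2 (h'.mono hG)⟩

lemma IsMinorOn.isMinor (h : IsMinorOn H G A) : IsMinor H G :=
  let ⟨f, hf, hdisj, hadj⟩ := h
  ⟨f, fun w => (hf w).2.2.connected_induce (hf w).1, hdisj, hadj⟩

lemma IsPlanar.isPlanarOn (h : IsPlanar G) (A : Set V) : IsPlanarOn G A :=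
  ⟨fun h' => h.1 h'.isMinor, fun h' => h.2 h'.isMinor⟩

lemma isMinorOn_completeGraph [LinearOrder W] {S : W → Set V}
    (hS : ∀ w, (S w).Nonempty ∧ S w ⊆ A ∧ PreconnectedOn G (S w))
    (h : ∀ v w, v < w → Disjoint (S v) (S w) ∧ Touches G (S v) (S w)) :
    IsMinorOn (completeGraph W) G A := by
  have hne : ∀ v w, v ≠ w → Disjoint (S v) (S w) ∧ Touches G (S v) (S w) := fun v w hvw =>
    hvw.lt_or_gt.elim (h v w) fun hwv => ⟨(h w v hwv).1.symm, (h w v hwv).2.symm⟩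
  exact ⟨S, hS, fun v w hvw => (hne v w hvw).1, fun v w hvw => (hne v w hvw.ne).2⟩

lemma isMinorOn_completeBipartiteGraph {W' : Type*} [Nonempty W] [Nonempty W']
    {S : W → Set V} {T : W' → Set V}
    (hS : ∀ v, S v ⊆ A ∧ PreconnectedOn G (S v)) (hT : ∀ w, T w ⊆ A ∧ PreconnectedOn G (T w))
    (hSS : ∀ v v', v ≠ v' → Disjoint (S v) (S v')) (hTT : ∀ w w', w ≠ w' → Disjoint (T w) (T w'))
    (hST : ∀ v w, Disjoint (S v) (T w)) (h : ∀ v w, Touches G (S v) (T w)) :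
    IsMinorOn (completeBipartiteGraph W W') G A := by
  refine ⟨Sum.elim S T, ?_, ?_, ?_⟩
  · rintro (v | w)
    · obtain ⟨a, ha, -⟩ := h v (Classical.arbitrary W')
      exact ⟨⟨a, ha⟩, hS v⟩
    · obtain ⟨-, -, b, hb, -⟩ := h (Classical.arbitrary W) w
      exact ⟨⟨b, hb⟩, hT w⟩
  · rintro (v | w) (v' | w') hne
    exacts [hSS v v' (ne_of_apply_ne _ hne), hST v w', (hST v' w).symm,
      hTT w w' (ne_of_apply_ne _ hne)]
  · rintro (v | w) (v' | w') hadj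
    · simp at hadj
    · exact h v w'
    · exact (h v' w).symm
    · simp at hadj

end Minors

section PeripheralMinors

variable {V : Type*} {G : SimpleGraph V} {A I J L X Y β : Set V} {P : Fin 3 → Set V} {p q x y : V}

/- The sides of the `K₃,₃` are `p`, `q`, `K` and `I`, `J`, `β`, where `K` is the component of `L`
outside `X ∪ β`; it touches `β` because `X` does not separate. -/
lemma IsPeripheral.isMinorOn_of_arcDecomposition (hX : IsPeripheral G A X)
    (harc : ArcDecomposition G X p q I J) (hpq : p ≠ q)
    (hβ : PreconnectedOn G β) (hβA : β ⊆ A \ X) (hpβ : Touches G {p} β) (hqβ : Touches G {q} β)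
    (hL : PreconnectedOn G L) (hLA : L ⊆ A \ (X ∪ β)) (hIL : Touches G I L)
    (hLJ : Touches G L J) :
    IsMinorOn (completeBipartiteGraph (Fin 3) (Fin 3)) G A := by
  have hLne : L.Nonempty := let ⟨l, hl, _⟩ := hLJ; ⟨l, hl⟩
  obtain ⟨K, hLK, hKA, hK, hKcl⟩ := hL.exists_component hLne hLA
  have hKβ : Touches G K β := by
    obtain ⟨l, hl⟩ := hLne
    obtain ⟨-, -, b, hb, -⟩ := hpβ
    obtain ⟨k, hk, c, hc, hkc⟩ := hX.preconnectedOn_diff.touches_diff (S := K)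
      ⟨l, by grind⟩ ⟨b, by grind⟩
    refine ⟨k, hk.2, c, ?_, hkc⟩
    by_contra hcβ
    exact hc.2 (hKcl k hk.2 c (by grind) hkc)
  obtain ⟨hI, hJ, hIJ, -, hXeq, hp, hq, ⟨hpI, hqI⟩, hpJ, hqJ⟩ := harc
  have hXA := hX.subset
  have hpA : p ∈ A := hXA (hXeq ▸ by simp)
  have hqA : q ∈ A := hXA (hXeq ▸ by simp)
  have hKX : Disjoint K X := Set.disjoint_left.2 fun v hv hvX => (hKA hv).2 (.inl hvX)
  refine isMinorOn_completeBipartiteGraph (S := ![{p}, {q}, K]) (T := ![I, J, β])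
    ?_ ?_ ?_ ?_ ?_ ?_ <;>
    simp only [Fin.forall_fin_succ, Matrix.cons_val_zero, Matrix.cons_val_succ, IsEmpty.forall_iff,
      and_true]
  · refine ⟨⟨?_, preconnectedOn_singleton p⟩, ⟨?_, preconnectedOn_singleton q⟩, ?_, hK⟩ <;> grind
  · exact ⟨⟨by grind, hI⟩, ⟨by grind, hJ⟩, hβA.trans Set.sdiff_subset, hβ⟩
  · grind
  · grind
  · grind
  · exact ⟨⟨hpI, hpJ, hpβ⟩, ⟨hqI, hqJ, hqβ⟩, (hIL.mono subset_rfl hLK).symm,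
      hLJ.mono hLK subset_rfl, hKβ⟩

lemma ThreeConnectedOn.preconnectedOn_union_arc [Finite V] (hA : ThreeConnectedOn G A)
    (hX : IsPeripheral G A X) (hI : PreconnectedOn G I) (hne : I.Nonempty) (hIA : I ⊆ A) :
    PreconnectedOn G ((A \ X) ∪ I) := by
  by_cases hIX : I ⊆ X
  · obtain ⟨i, hi⟩ := hne
    obtain ⟨c, hc, hic⟩ := hA.exists_adj_notMem hX.isInducedCycle (hIX hi) (hIA hi)
    exact hX.preconnectedOn_diff.union_of_touches hI ⟨c, hc, i, hi, hic.symm⟩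
  · obtain ⟨i, hi, hiX⟩ := Set.not_subset.1 hIX
    exact hX.preconnectedOn_diff.union hI ⟨i, ⟨hIA hi, hiX⟩, hi⟩

/- As `Y` does not separate, the two arcs of `X` are linked off `β`. -/
lemma ThreeConnectedOn.isMinorOn_of_arcDecomposition [Finite V] (hA : ThreeConnectedOn G A)
    (hX : IsPeripheral G A X) (hY : IsPeripheral G A Y) (harc : ArcDecomposition G X p q I J)
    (hpq : p ≠ q) (hpY : p ∈ Y) (hqY : q ∈ Y) (hβ : PreconnectedOn G β) (hβYX : β ⊆ Y \ X)
    (hpβ : Touches G {p} β) (hqβ : Touches G {q} β) :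
    IsMinorOn (completeBipartiteGraph (Fin 3) (Fin 3)) G A := by
  have ⟨hI, hJ, hIJ, hnot, hXeq, _, _, ⟨⟨_, _, i, hi, _⟩, _⟩, ⟨_, _, j, hj, _⟩, _⟩ := harc
  have hXA := hX.subset
  obtain ⟨c, hc, -⟩ := hA.exists_adj_notMem hY.isInducedCycle hpY (hY.subset hpY)
  have hD : PreconnectedOn G (((A \ Y) ∪ I) ∪ ((A \ Y) ∪ J)) :=
    (hA.preconnectedOn_union_arc hY hI ⟨i, hi⟩ (by grind)).union
      (hA.preconnectedOn_union_arc hY hJ ⟨j, hj⟩ (by grind)) ⟨c, .inl hc, .inl hc⟩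
  rcases hD.touches_or_exists_link (by grind) (by grind) ⟨i, hi⟩ ⟨j, hj⟩ hIJ with
    h | ⟨L, hLD, hL, hIL, hLJ⟩
  · exact absurd h hnot
  · have hLY : L ⊆ A \ Y := fun v hv => by grind [hLD hv]
    have hLX : ∀ v ∈ L, v ∉ X := fun v hv => by
      rw [hXeq]
      rintro ((rfl | rfl) | hvIJ)
      exacts [(hLY hv).2 hpY, (hLY hv).2 hqY, (hLD hv).2 hvIJ]
    exact hX.isMinorOn_of_arcDecomposition harc hpq hβ (by grind [hY.subset]) hpβ hqβ hL
      (by grind) hIL hLJ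

/- Otherwise a component `β` of `Y \ X` attaches to `X` at two nonadjacent vertices. -/
lemma ThreeConnectedOn.inter_subset_pair [Finite V] (hA : ThreeConnectedOn G A)
    (hplanar : IsPlanarOn G A) (hX : IsPeripheral G A X) (hY : IsPeripheral G A Y) (hne : X ≠ Y)
    (hx : x ∈ X ∩ Y) (hy : y ∈ X ∩ Y) (hxy : x ≠ y) : X ∩ Y ⊆ {x, y} := by
  intro w hw
  by_contra hwxy
  obtain ⟨b, hbY, hbX⟩ : (Y \ X).Nonempty := Set.sdiff_nonempty.2 fun h =>
    hne (hX.isInducedCycle.eq_of_subset hY.isInducedCycle h).symm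
  have hb : b ∈ Y \ X := ⟨hbY, hbX⟩
  obtain ⟨β, hbβ, hβYX, hβ, hβcl⟩ := (preconnectedOn_singleton (G := G) b).exists_component
    (Set.singleton_nonempty b) (Set.singleton_subset_iff.2 hb)
  have hβY : β ⊆ Y := hβYX.trans Set.sdiff_subset
  have hdisj : ∀ {v}, v ∈ X → v ∉ β := fun hv hvβ => (hβYX hvβ).2 hv
  obtain ⟨p, hp, q, hq, hpq, hpβ, hqβ⟩ := hY.isInducedCycle.exists_two_attachments
    ⟨b, hbβ rfl⟩ hβY ⟨hx.2, hdisj hx.1⟩ ⟨hy.2, hdisj hy.1⟩ hxy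
  have hattach : ∀ v ∈ Y \ β, Touches G {v} β → v ∈ X := by
    rintro v hv ⟨_, rfl, c, hc, hvc⟩
    by_contra hvX
    exact hv.2 (hβcl c hc _ ⟨hv.1, hvX⟩ hvc.symm)
  have hpX := hattach p hp hpβ
  have hqX := hattach q hq hqβ
  have hnadj : ¬ G.Adj p q := fun hadj => by
    have hYeq := hY.isInducedCycle.eq_of_chord hβ hβY hp.1 hq.1 hp.2 hq.2 hadj
      (by simpa [Touches] using hpβ) (by simpa [Touches] using hqβ)
    grind
  obtain ⟨I, J, harc⟩ := hX.isInducedCycle.exists_arcDecomposition hpX hqX hpq hnadj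
  exact hplanar.2 (hA.isMinorOn_of_arcDecomposition hX hY harc hpq hp.1 hq.1 hβ hβYX hpβ hqβ)

lemma isMinorOn_completeBipartiteGraph_of_three_sets {K : Set V} (hx : x ∈ A) (hy : y ∈ A)
    (hxy : x ≠ y) (hP : ∀ i, P i ⊆ A \ {x, y} ∧ PreconnectedOn G (P i))
    (hPP : ∀ i j, i ≠ j → Disjoint (P i) (P j)) (hxP : ∀ i, Touches G {x} (P i))
    (hyP : ∀ i, Touches G {y} (P i)) (hK : PreconnectedOn G K) (hKA : K ⊆ A \ {x, y})
    (hKP : ∀ i, Disjoint K (P i)) (h : ∀ i, Touches G K (P i)) :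
    IsMinorOn (completeBipartiteGraph (Fin 3) (Fin 3)) G A := by
  refine isMinorOn_completeBipartiteGraph (S := ![{x}, {y}, K]) (T := P) ?_
    (fun i => ⟨(hP i).1.trans Set.sdiff_subset, (hP i).2⟩) ?_ hPP ?_ ?_
  · simp only [Fin.forall_fin_succ, Matrix.cons_val_zero, Matrix.cons_val_succ, IsEmpty.forall_iff,
      and_true]
    exact ⟨⟨by grind, preconnectedOn_singleton x⟩, ⟨by grind, preconnectedOn_singleton y⟩,
      by grind, hK⟩
  · simp only [Fin.forall_fin_succ, Matrix.cons_val_zero, Matrix.cons_val_succ, IsEmpty.forall_iff,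
      and_true]
    grind
  · intro v w
    have hdisj : ∀ z ∈ ({x, y} : Set V), Disjoint {z} (P w) := fun z hz =>
      Set.disjoint_singleton_left.2 fun hzP => ((hP w).1 hzP).2 hz
    fin_cases v
    exacts [hdisj x (.inl rfl), hdisj y (.inr rfl), hKP w]
  · intro v w
    fin_cases v
    exacts [hxP w, hyP w, h w]

lemma isMinorOn_completeGraph_of_three_sets (hx : x ∈ A) (hy : y ∈ A) (hxy : G.Adj x y)
    (hP : ∀ i, P i ⊆ A \ {x, y} ∧ PreconnectedOn G (P i)) (hxP : ∀ i, Touches G {x} (P i))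
    (hyP : ∀ i, Touches G {y} (P i))
    (hPP : ∀ i j, i ≠ j → Disjoint (P i) (P j) ∧ Touches G (P i) (P j)) :
    IsMinorOn (completeGraph (Fin 5)) G A := by
  have hdisj : ∀ i, ∀ z ∈ ({x, y} : Set V), Disjoint {z} (P i) := fun i z hz =>
    Set.disjoint_singleton_left.2 fun hzP => ((hP i).1 hzP).2 hz
  refine isMinorOn_completeGraph (S := Fin.cons {x} (Fin.cons {y} P)) ?_ ?_
  · refine Fin.cases ⟨Set.singleton_nonempty x, Set.singleton_subset_iff.2 hx,
      preconnectedOn_singleton x⟩ (Fin.cases ⟨Set.singleton_nonempty y,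
      Set.singleton_subset_iff.2 hy, preconnectedOn_singleton y⟩ fun i => ?_)
    obtain ⟨-, -, p, hp, -⟩ := hxP i
    exact ⟨⟨p, hp⟩, (hP i).1.trans Set.sdiff_subset, (hP i).2⟩
  · refine Fin.cases (Fin.cases (by simp) (Fin.cases ?_ ?_))
      (Fin.cases (Fin.cases (by simp) (Fin.cases (by simp) ?_))
        fun i => Fin.cases (by simp) (Fin.cases (by simp) fun j hij => ?_))
    · exact fun _ => ⟨Set.disjoint_singleton.2 hxy.ne, x, rfl, y, rfl, hxy⟩
    · exact fun i _ => ⟨hdisj i x (.inl rfl), hxP i⟩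
    · exact fun i _ => ⟨hdisj i y (.inr rfl), hyP i⟩
    · exact hPP i j (by simpa using hij.ne)

lemma PreconnectedOn.exists_link {R : Set V} (h : PreconnectedOn G (I ∪ J ∪ R))
    (hIc : PreconnectedOn G I) (hI : I.Nonempty) (hJ : J.Nonempty) (hIJ : Disjoint I J) :
    ∃ K ⊆ R, PreconnectedOn G K ∧ PreconnectedOn G (I ∪ K) ∧ Touches G (I ∪ K) J ∧
      (K.Nonempty → Touches G K I ∧ Touches G K J) := by
  rcases h.touches_or_exists_link (by grind) (by grind) hI hJ hIJ with
    hT | ⟨L, hLD, hL, hIL, hLJ⟩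
  · exact ⟨∅, by simp, preconnectedOn_of_subsingleton (by simp), by simpa using hIc,
      by simpa using hT, by simp⟩
  · exact ⟨L, by grind, hL, hIc.union_of_touches hL hIL, hLJ.mono (by simp) subset_rfl,
      fun _ => ⟨hIL.symm, hLJ⟩⟩

/- If a connected subset of `R` touches all three sets, it yields a `K₃,₃`; otherwise the links
between the pairs of sets are disjoint, and yield a `K₅`. -/
lemma not_isPlanarOn_of_three_sets {R : Set V} (hx : x ∈ A) (hy : y ∈ A) (hxy : G.Adj x y)
    (hP : ∀ i, P i ⊆ A \ {x, y} ∧ PreconnectedOn G (P i))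
    (hPP : ∀ i j, i ≠ j → Disjoint (P i) (P j)) (hxP : ∀ i, Touches G {x} (P i))
    (hyP : ∀ i, Touches G {y} (P i)) (hRA : R ⊆ A \ {x, y}) (hRP : ∀ i, Disjoint R (P i))
    (hR : ∀ i, PreconnectedOn G (P i ∪ P (i + 1) ∪ R)) : ¬ IsPlanarOn G A := by
  intro hplanar
  have hne : ∀ i, (P i).Nonempty := fun i => let ⟨_, _, p, hp, _⟩ := hxP i; ⟨p, hp⟩
  choose K hKR hKconn hPK hKtouch hKne using fun i =>
    (hR i).exists_link (hP i).2 (hne i) (hne (i + 1)) (hPP i (i + 1) (by simp))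
  have hKK : ∀ i j, i ≠ j → Disjoint (K i) (K j) := by
    intro i j hij
    by_contra hdisj
    obtain ⟨v, hvi, hvj⟩ := Set.not_disjoint_iff.1 hdisj
    have hcover : ∀ i j k : Fin 3, i ≠ j → k = i ∨ k = i + 1 ∨ k = j ∨ k = j + 1 := by decide
    have hUR : K i ∪ K j ⊆ R := Set.union_subset (hKR i) (hKR j)
    refine hplanar.2 (isMinorOn_completeBipartiteGraph_of_three_sets hx hy hxy.ne hP hPP hxP hyP
      ((hKconn i).union (hKconn j) ⟨v, hvi, hvj⟩) (hUR.trans hRA)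
      (fun k => (hRP k).mono_left hUR) fun k => ?_)
    obtain ⟨hi, hi'⟩ := hKne i ⟨v, hvi⟩
    obtain ⟨hj, hj'⟩ := hKne j ⟨v, hvj⟩
    rcases hcover i j k hij with rfl | rfl | rfl | rfl
    exacts [hi.mono (by simp) subset_rfl, hi'.mono (by simp) subset_rfl,
      hj.mono (by simp) subset_rfl, hj'.mono (by simp) subset_rfl]
  refine hplanar.1 (isMinorOn_completeGraph_of_three_sets (P := fun i => P i ∪ K i) hx hy hxy
    (fun i => ⟨Set.union_subset (hP i).1 ((hKR i).trans hRA), hPK i⟩)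
    (fun i => (hxP i).mono subset_rfl (by simp))
    (fun i => (hyP i).mono subset_rfl (by simp)) fun i j hij => ⟨?_, ?_⟩)
  · simp only [Set.disjoint_union_left, Set.disjoint_union_right]
    exact ⟨⟨hPP i j hij, (hRP j).mono_left (hKR i)⟩, ((hRP i).mono_left (hKR j)).symm, hKK i j hij⟩
  · have hnext : ∀ i j : Fin 3, i ≠ j → j = i + 1 ∨ i = j + 1 := by decide
    rcases hnext i j hij with rfl | rfl
    · exact (hKtouch i).mono subset_rfl (by simp)
    · exact ((hKtouch j).mono subset_rfl (by simp)).symm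

lemma ThreeConnectedOn.not_injective_of_isPeripheral [Finite V] (hA : ThreeConnectedOn G A)
    (hplanar : IsPlanarOn G A) (hxy : G.Adj x y) {X : Fin 3 → Set V}
    (hX : ∀ i, IsPeripheral G A (X i)) (hx : ∀ i, x ∈ X i) (hy : ∀ i, y ∈ X i) :
    ¬ Function.Injective X := by
  intro hinj
  have hinter : ∀ i j, i ≠ j → X i ∩ X j ⊆ {x, y} := fun i j hij =>
    hA.inter_subset_pair hplanar (hX i) (hX j) (hinj.ne hij) ⟨hx i, hx j⟩ ⟨hy i, hy j⟩ hxy.ne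
  have hxyX : ∀ i, {x, y} ⊆ X i := fun i =>
    Set.insert_subset (hx i) (Set.singleton_subset_iff.2 (hy i))
  have hR : ∀ i, A \ X (i + 2) = X i \ {x, y} ∪ X (i + 1) \ {x, y} ∪ A \ ⋃ j, X j := by
    intro i
    have hcover : ∀ i j : Fin 3, j = i ∨ j = i + 1 ∨ j = i + 2 := by decide
    have hU : ⋃ j, X j = X i ∪ X (i + 1) ∪ X (i + 2) := by
      refine (Set.iUnion_subset fun j => ?_).antisymm (Set.union_subset (Set.union_subset
        (Set.subset_iUnion X i) (Set.subset_iUnion X _)) (Set.subset_iUnion X _))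
      rcases hcover i j with rfl | rfl | rfl <;> grind
    have h₀ := hinter i (i + 2) (by simp)
    have h₁ := hinter (i + 1) (i + 2) (by simp)
    have h₂ := hxyX (i + 2)
    have hXA := (hX i).subset
    have hXA' := (hX (i + 1)).subset
    rw [hU]
    grind
  refine not_isPlanarOn_of_three_sets (P := fun i => X i \ {x, y}) (R := A \ ⋃ j, X j)
    ((hX 0).subset (hx 0)) ((hX 0).subset (hy 0)) hxy (fun i => ⟨?_, ?_⟩) (fun i j hij => ?_)
    (fun i => ?_) (fun i => ?_) ?_ (fun i => ?_) (fun i => hR i ▸ (hX (i + 2)).preconnectedOn_diff)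
    hplanar
  · exact Set.sdiff_subset_sdiff_left (hX i).subset
  · exact (hX i).isInducedCycle.preconnectedOn_diff
      ((preconnectedOn_singleton y).insert_of_adj ⟨y, rfl, hxy⟩) (hxyX i)
  · exact Set.disjoint_left.2 fun v hi hj => hi.2 (hinter i j hij ⟨hi.1, hj.1⟩)
  · obtain ⟨c, hc, hcy, hxc⟩ := (hX i).isInducedCycle.exists_adj_ne (hx i) y
    exact ⟨x, rfl, c, ⟨hc, by simp [hcy, hxc.ne']⟩, hxc⟩
  · obtain ⟨d, hd, hdx, hyd⟩ := (hX i).isInducedCycle.exists_adj_ne (hy i) x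
    exact ⟨y, rfl, d, ⟨hd, by simp [hdx, hyd.ne']⟩, hyd⟩
  · exact Set.sdiff_subset_sdiff_right ((hxyX 0).trans (Set.subset_iUnion X 0))
  · exact Set.disjoint_sdiff_left.mono_right
      (Set.sdiff_subset.trans (Set.subset_iUnion X i))

end PeripheralMinors

/-! ### Separations -/

section Separations

variable {V : Type*} {G : SimpleGraph V} {A A₁ A₂ B C S X : Set V} {u v : V}

/-- `(A₁, A₂)` is a separation of the subgraph of `G` induced by `A`: the two parts are proper, they
cover `A`, and no edge joins `A₁ \ A₂` to `A₂ \ A₁`. Its separator is `A₁ ∩ A₂`. -/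
structure IsSeparation (G : SimpleGraph V) (A A₁ A₂ : Set V) : Prop where
  union_eq : A₁ ∪ A₂ = A
  left_ne : A₁ ≠ A
  right_ne : A₂ ≠ A
  not_touches : ¬ Touches G (A₁ \ A₂) (A₂ \ A₁)

namespace IsSeparation

lemma symm (h : IsSeparation G A A₁ A₂) : IsSeparation G A A₂ A₁ :=
  ⟨Set.union_comm A₂ A₁ ▸ h.union_eq, h.right_ne, h.left_ne, fun h' => h.not_touches h'.symm⟩

lemma left_ssubset (h : IsSeparation G A A₁ A₂) : A₁ ⊂ A :=
  (h.union_eq ▸ Set.subset_union_left : A₁ ⊆ A).ssubset_of_ne h.left_ne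

end IsSeparation

lemma exists_isSeparation_of_not_preconnectedOn (h : ¬ PreconnectedOn G (A \ S)) :
    ∃ A₁ A₂, IsSeparation G A A₁ A₂ ∧ A₁ ∩ A₂ ⊆ S := by
  rw [preconnectedOn_iff] at h
  push Not at h
  obtain ⟨T, ⟨a, ha, haT⟩, hT, hsub⟩ := h
  obtain ⟨b, hb, hbT⟩ := Set.not_subset.1 hsub
  refine ⟨A ∩ (S ∪ T), A \ (T \ S), ⟨by grind, by grind, by grind, ?_⟩, by grind⟩
  rintro ⟨x, hx, y, hy, hxy⟩
  exact hy.2 ⟨hy.1.1, .inr (hT x (by grind) y (by grind) hxy)⟩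

/- Otherwise the neighbours of `C` other than `u` would form a smaller separator. -/
lemma touches_of_forall_isSeparation_nontrivial
    (h : ∀ A₁ A₂, IsSeparation G A A₁ A₂ → (A₁ ∩ A₂).Nontrivial) (hC : C.Nonempty) (hCA : C ⊆ A)
    (hu : u ∈ A \ C) (hv : v ∈ A \ C) (huv : u ≠ v)
    (hCcl : ∀ a ∈ C, ∀ b ∈ A \ {u, v}, G.Adj a b → b ∈ C) : Touches G {u} C := by
  by_contra hno
  obtain ⟨c, hc⟩ := hC
  refine (h (insert v C) (A \ C) ⟨by grind, fun h => ?_, fun h => ?_, ?_⟩).not_subsingleton ?_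
  · have := h.symm ▸ hu.1
    grind
  · have := h.symm ▸ hCA hc
    grind
  · rintro ⟨a, ha, b, hb, hab⟩
    have haC : a ∈ C := by grind
    by_cases hbu : b = u
    · exact hno ⟨u, rfl, a, haC, hbu ▸ hab.symm⟩
    · exact hb.1.2 (hCcl a haC b ⟨hb.1.1, by grind⟩ hab)
  · refine (Set.subsingleton_singleton (a := v)).anti ?_
    grind

lemma IsSeparation.exists_link (hsep : IsSeparation G A A₁ A₂) (huv : u ≠ v)
    (hinter : A₁ ∩ A₂ = {u, v})
    (h : ∀ A₁ A₂, IsSeparation G A A₁ A₂ → (A₁ ∩ A₂).Nontrivial) :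
    ∃ C ⊆ A₂ \ A₁, PreconnectedOn G C ∧ Touches G {u} C ∧ Touches G {v} C := by
  have hA := hsep.union_eq
  obtain ⟨c, hc⟩ : (A₂ \ A₁).Nonempty := Set.sdiff_nonempty.2 fun hsub =>
    hsep.left_ne (hA ▸ (Set.union_eq_self_of_subset_right hsub).symm)
  obtain ⟨C, hcC, hCA, hC, hCcl⟩ := (preconnectedOn_singleton (G := G) c).exists_component
    (Set.singleton_nonempty c) (Set.singleton_subset_iff.2 hc)
  have hu : u ∈ A₁ ∩ A₂ := hinter ▸ Set.mem_insert u {v}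
  have hv : v ∈ A₁ ∩ A₂ := hinter ▸ Set.mem_insert_of_mem u rfl
  have hCcl' : ∀ a ∈ C, ∀ b ∈ A \ {u, v}, G.Adj a b → b ∈ C := by
    intro a ha b hb hab
    rw [← hinter, ← hA] at hb
    refine hCcl a ha b ?_ hab
    by_contra hb'
    exact hsep.not_touches ⟨b, by grind, a, hCA ha, hab.symm⟩
  refine ⟨C, hCA, hC, touches_of_forall_isSeparation_nontrivial h ⟨c, hcC rfl⟩ ?_ ?_ ?_ huv hCcl',
    touches_of_forall_isSeparation_nontrivial h ⟨c, hcC rfl⟩ ?_ ?_ ?_ huv.symm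
      (Set.pair_comm u v ▸ hCcl')⟩ <;> grind

lemma sup_edge_adj_iff {a b : V} :
    (G ⊔ edge u v).Adj a b ↔ G.Adj a b ∨ a ≠ b ∧ (a = u ∧ b = v ∨ a = v ∧ b = u) := by
  rw [sup_adj, edge_adj, and_comm (a := a ≠ b)]

lemma PreconnectedOn.of_sup_edge (hX : PreconnectedOn (G ⊔ edge u v) X) (hu : u ∉ X) :
    PreconnectedOn G X := by
  refine preconnectedOn_iff.2 fun S hS hcl => preconnectedOn_iff.1 hX S hS fun a ha b hb hab => ?_
  rcases sup_edge_adj_iff.1 hab with h | ⟨-, ⟨rfl, -⟩ | ⟨-, rfl⟩⟩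
  exacts [hcl a ha b hb h, absurd ha.1 hu, absurd hb hu]

lemma PreconnectedOn.union_of_sup_edge (hX : PreconnectedOn (G ⊔ edge u v) X) (hu : u ∈ X)
    (hC : PreconnectedOn G C) (huC : Touches G {u} C) (hvC : Touches G {v} C) :
    PreconnectedOn G (X ∪ C) := by
  obtain ⟨c, hc, huc⟩ : ∃ c ∈ C, G.Adj u c := by simpa [Touches] using huC
  obtain ⟨d, hd, hvd⟩ : ∃ d ∈ C, G.Adj v d := by simpa [Touches] using hvC
  rw [preconnectedOn_iff] at hX hC ⊢
  intro S hne hS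
  have hXS (huv : v ∈ X → (u ∈ S ↔ v ∈ S)) (h : (X ∩ S).Nonempty) : X ⊆ S := by
    refine hX S h fun a ha b hb hab => ?_
    rcases sup_edge_adj_iff.1 hab with h | ⟨-, ⟨rfl, rfl⟩ | ⟨rfl, rfl⟩⟩
    exacts [hS a ⟨.inl ha.1, ha.2⟩ b (.inl hb) h, (huv hb).1 ha.2, (huv ha.1).2 ha.2]
  by_cases hCS : (C ∩ S).Nonempty
  · have hCS : C ⊆ S := hC S hCS fun a ha b hb => hS a ⟨.inr ha.1, ha.2⟩ b (.inr hb)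
    have huS : u ∈ S := hS c ⟨.inr hc, hCS hc⟩ u (.inl hu) huc.symm
    have hvS (hv : v ∈ X) : v ∈ S := hS d ⟨.inr hd, hCS hd⟩ v (.inl hv) hvd.symm
    exact Set.union_subset (hXS (fun hv => iff_of_true huS (hvS hv)) ⟨u, hu, huS⟩) hCS
  · have huS : u ∉ S := fun h => hCS ⟨c, hc, hS u ⟨.inl hu, h⟩ c (.inr hc) huc⟩
    have hvS (hv : v ∈ X) : v ∉ S := fun h => hCS ⟨d, hd, hS v ⟨.inl hv, h⟩ d (.inr hd) hvd⟩
    obtain ⟨s, hs | hs, hsS⟩ := hne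
    · exact absurd (hXS (fun hv => iff_of_false huS (hvS hv)) ⟨s, hs, hsS⟩ hu) huS
    · exact absurd ⟨s, hs, hsS⟩ hCS

lemma IsMinorOn.of_sup_edge {W : Type*} {H : SimpleGraph W}
    (h : IsMinorOn H (G ⊔ edge u v) A) (hAB : A ⊆ B) (hCA : C ⊆ B \ A) (hC : PreconnectedOn G C)
    (huC : Touches G {u} C) (hvC : Touches G {v} C) : IsMinorOn H G B := by
  classical
  obtain ⟨f, hf, hdisj, hadj⟩ := h
  have hfC : ∀ w, Disjoint (f w) C := fun w =>
    Set.disjoint_sdiff_right.mono ((hf w).2.1) hCA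
  let f' : W → Set V := fun w => if u ∈ f w then f w ∪ C else f w
  have hsub : ∀ w, f w ⊆ f' w := fun w => by
    by_cases hu : u ∈ f w <;> simp [f', hu]
  have hsub' : ∀ w, f' w ⊆ f w ∪ C := fun w => by
    by_cases hu : u ∈ f w <;> simp [f', hu]
  have huvf : ∀ w w', u ∈ f w → v ∈ f w' → Touches G (f' w) (f' w') := by
    intro w w' hw hw'
    simp only [f', if_pos hw]
    exact (hvC.mono (Set.singleton_subset_iff.2 (hsub w' hw')) Set.subset_union_right).symm
  refine ⟨f', fun w => ⟨(hf w).1.mono (hsub w), (hsub' w).trans (by grind), ?_⟩,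
    fun w w' hne => ?_, fun w w' hww => ?_⟩
  · by_cases hu : u ∈ f w
    · simpa only [f', if_pos hu] using (hf w).2.2.union_of_sup_edge hu hC huC hvC
    · simpa only [f', if_neg hu] using (hf w).2.2.of_sup_edge hu
  · have h₁ := hfC w
    have h₂ := hfC w'
    have h₃ := hdisj w w' hne
    by_cases hu : u ∈ f w <;> by_cases hu' : u ∈ f w' <;> simp only [f', hu, hu'] <;> grind
  · obtain ⟨a, ha, b, hb, hab⟩ := hadj w w' hww
    rcases sup_edge_adj_iff.1 hab with h | ⟨-, ⟨rfl, rfl⟩ | ⟨rfl, rfl⟩⟩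
    exacts [⟨a, hsub w ha, b, hsub w' hb, h⟩, huvf w w' ha hb, (huvf w' w hb ha).symm]

lemma IsPlanarOn.sup_edge (h : IsPlanarOn G B) (hAB : A ⊆ B) (hCA : C ⊆ B \ A)
    (hC : PreconnectedOn G C) (huC : Touches G {u} C) (hvC : Touches G {v} C) :
    IsPlanarOn (G ⊔ edge u v) A :=
  ⟨fun h' => h.1 (h'.of_sup_edge hAB hCA hC huC hvC),
    fun h' => h.2 (h'.of_sup_edge hAB hCA hC huC hvC)⟩

lemma IsPlanarOn.mono (h : IsPlanarOn G B) (hAB : A ⊆ B) : IsPlanarOn G A :=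
  have hmono {W : Type} {H : SimpleGraph W} (h' : IsMinorOn H G A) : IsMinorOn H G B :=
    let ⟨f, hf, hf'⟩ := h'
    ⟨f, fun w => ⟨(hf w).1, (hf w).2.1.trans hAB, (hf w).2.2⟩, hf'⟩
  ⟨fun h' => h.1 (hmono h'), fun h' => h.2 (hmono h')⟩

end Separations

/-! ### Two-bases -/

section TwoBases

universe u

variable {V : Type u} [Fintype V] {G : SimpleGraph V} {A A₁ A₂ : Set V}

/-- Mac Lane's condition on a family `x` in the cycle space of `G[A]`: every edge lies in at most
two members, and the family generates. Generation is stated in the dual form: a signing orthogonal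
to all members is balanced. No linear independence is required. -/
structure IsTwoBasis {ι : Type*} (G : SimpleGraph V) (A : Set V) (x : ι → Sym2 V → ZMod 2) :
    Prop where
  mem_cycleSpace : ∀ i, x i ∈ cycleSpace G A
  ncard_le : ∀ e, {i | x i e ≠ 0}.ncard ≤ 2
  balancedOn : ∀ g, (∀ i, x i ⬝ᵥ g = 0) → BalancedOn G g A

/-- The cycle space of `G[A]` is generated by a finite family as in Mac Lane's criterion. -/
def HasTwoBasis (G : SimpleGraph V) (A : Set V) : Prop :=
  ∃ (ι : Type u) (_ : Finite ι) (x : ι → Sym2 V → ZMod 2), IsTwoBasis G A x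

lemma hasTwoBasis_of_inducedCycles (F : Set (Set V)) (hF : ∀ X ∈ F, X ⊆ A ∧ IsInducedCycle G X)
    (hcount : ∀ a b, G.Adj a b → {X ∈ F | a ∈ X ∧ b ∈ X}.ncard ≤ 2)
    (hspan : ∀ g, (∀ X ∈ F, BalancedOn G g X) → BalancedOn G g A) : HasTwoBasis G A := by
  refine ⟨F, inferInstance, fun X => cycleVector G X, fun X => ?_, Sym2.ind fun a b => ?_,
    fun g hg => hspan g fun X hX => (hF X hX).2.balancedOn_of_dotProduct_eq_zero (hg ⟨X, hX⟩)⟩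
  · exact (hF X X.2).2.cycleVector_mem_cycleSpace (hF X X.2).1
  · rw [← Set.ncard_image_of_injective _ Subtype.val_injective]
    by_cases hab : G.Adj a b
    · refine (Set.ncard_le_ncard ?_).trans (hcount a b hab)
      rintro _ ⟨X, hX, rfl⟩
      exact ⟨X.2, (adj_of_cycleVector_ne_zero hX).2⟩
    · have : {X : F | cycleVector G X s(a, b) ≠ 0} = ∅ :=
        Set.eq_empty_of_forall_notMem fun X hX => hab (adj_of_cycleVector_ne_zero hX).1
      simp [this]

lemma hasTwoBasis_of_ncard_le_three (hA : A.ncard ≤ 3) : HasTwoBasis G A := by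
  refine hasTwoBasis_of_inducedCycles {X | X ⊆ A ∧ IsInducedCycle G X} (fun X hX => hX)
    (fun a b _ => ?_) fun g hg => ?_
  · have hsub : {X ∈ {X | X ⊆ A ∧ IsInducedCycle G X} | a ∈ X ∧ b ∈ X} ⊆ {A} := fun X hX =>
      Set.eq_of_subset_of_ncard_le hX.1.1 (hA.trans hX.1.2.three_le_ncard)
    exact (Set.ncard_le_ncard hsub).trans (by simp)
  · by_contra hcon
    obtain ⟨X, hXA, hX, hunbal⟩ := exists_isInducedCycle_of_not_balancedOn hcon
    exact hunbal (hg X ⟨hXA, hX⟩)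

lemma ThreeConnectedOn.hasTwoBasis (hA : ThreeConnectedOn G A) (hplanar : IsPlanarOn G A) :
    HasTwoBasis G A := by
  refine hasTwoBasis_of_inducedCycles {X | IsPeripheral G A X}
    (fun X hX => ⟨hX.subset, hX.isInducedCycle⟩) (fun a b hab => ?_)
    fun g hg => hA.balancedOn_of_isPeripheral hg
  by_contra! hcard
  obtain ⟨X, hX, Y, hY, Z, hZ, hXY, hXZ, hYZ⟩ := (Set.two_lt_ncard (Set.toFinite _)).1 hcard
  refine hA.not_injective_of_isPeripheral hplanar hab (X := ![X, Y, Z]) ?_ ?_ ?_ ?_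
  · simpa [Fin.forall_fin_succ] using ⟨hX.1, hY.1, hZ.1⟩
  · simpa [Fin.forall_fin_succ] using ⟨hX.2.1, hY.2.1, hZ.2.1⟩
  · simpa [Fin.forall_fin_succ] using ⟨hX.2.2, hY.2.2, hZ.2.2⟩
  · intro i j
    fin_cases i <;> fin_cases j <;> simp [hXY, hXZ, hYZ, hXY.symm, hXZ.symm, hYZ.symm]

lemma IsTwoBasis.sum {ι κ : Type*} [Finite ι] [Finite κ] {x : ι → Sym2 V → ZMod 2}
    {y : κ → Sym2 V → ZMod 2}
    (hx : IsTwoBasis G A₁ x) (hy : IsTwoBasis G A₂ y) (hconn : PreconnectedOn G (A₁ ∩ A₂))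
    (hno : ¬ Touches G (A₁ \ A₂) (A₂ \ A₁))
    (hcount : ∀ a ∈ A₁ ∩ A₂, ∀ b ∈ A₁ ∩ A₂, G.Adj a b →
      {i | x i s(a, b) ≠ 0}.ncard ≤ 1 ∧ {j | y j s(a, b) ≠ 0}.ncard ≤ 1) :
    IsTwoBasis G (A₁ ∪ A₂) (Sum.elim x y) where
  mem_cycleSpace := by
    rintro (i | j)
    · exact mem_cycleSpace_of_adj (hx.mem_cycleSpace i) fun a b h =>
        (adj_of_mem_cycleSpace (hx.mem_cycleSpace i) h).imp_right (.imp .inl .inl)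
    · exact mem_cycleSpace_of_adj (hy.mem_cycleSpace j) fun a b h =>
        (adj_of_mem_cycleSpace (hy.mem_cycleSpace j) h).imp_right (.imp .inr .inr)
  ncard_le := Sym2.ind fun a b => by
    have hunion : {k | Sum.elim x y k s(a, b) ≠ 0} =
        Sum.inl '' {i | x i s(a, b) ≠ 0} ∪ Sum.inr '' {j | y j s(a, b) ≠ 0} := by
      ext (i | j) <;> simp
    refine (hunion ▸ Set.ncard_union_le _ _).trans ?_
    rw [Set.ncard_image_of_injective _ Sum.inl_injective,
      Set.ncard_image_of_injective _ Sum.inr_injective]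
    have h₁ := hx.ncard_le s(a, b)
    have h₂ := hy.ncard_le s(a, b)
    rcases {i | x i s(a, b) ≠ 0}.eq_empty_or_nonempty with h | ⟨i, hi⟩
    · rwa [h, Set.ncard_empty, zero_add]
    rcases {j | y j s(a, b) ≠ 0}.eq_empty_or_nonempty with h | ⟨j, hj⟩
    · rwa [h, Set.ncard_empty, add_zero]
    obtain ⟨hab, ha₁, hb₁⟩ := adj_of_mem_cycleSpace (hx.mem_cycleSpace i) hi
    obtain ⟨-, ha₂, hb₂⟩ := adj_of_mem_cycleSpace (hy.mem_cycleSpace j) hj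
    obtain ⟨h₃, h₄⟩ := hcount a ⟨ha₁, ha₂⟩ b ⟨hb₁, hb₂⟩ hab
    exact add_le_add h₃ h₄
  balancedOn g hg := (hx.balancedOn g fun i => hg (.inl i)).union
    (hy.balancedOn g fun j => hg (.inr j)) hconn hno

lemma IsSeparation.hasTwoBasis (h : IsSeparation G A A₁ A₂) (hinter : (A₁ ∩ A₂).Subsingleton)
    (h₁ : HasTwoBasis G A₁) (h₂ : HasTwoBasis G A₂) : HasTwoBasis G A := by
  obtain ⟨ι, _, x, hx⟩ := h₁
  obtain ⟨κ, _, y, hy⟩ := h₂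
  refine ⟨ι ⊕ κ, inferInstance, Sum.elim x y, h.union_eq ▸ hx.sum hy
    (preconnectedOn_of_subsingleton hinter) h.not_touches fun a ha b hb hab => ?_⟩
  exact absurd (hinter ha hb) hab.ne

lemma natCast_ncard_ne_zero {ι : Type*} [Fintype ι] (c : ι → ZMod 2) :
    ({i | c i ≠ 0}.ncard : ZMod 2) = ∑ i, c i := by
  classical
  have hc : ∀ d : ZMod 2, (if d ≠ 0 then 1 else 0) = d := by decide
  rw [Set.ncard_eq_toFinset_card', Set.toFinset_ofPred, Finset.card_filter, Nat.cast_sum]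
  exact Finset.sum_congr rfl fun i _ => by rw [Nat.cast_ite, Nat.cast_one, Nat.cast_zero, hc]

lemma ncard_update_sum_ne_zero_le {ι : Type*} [Fintype ι] [DecidableEq ι] (c : ι → ZMod 2)
    (i₀ : ι) (hc : {i | c i ≠ 0}.ncard ≤ 2) :
    {i | Function.update c i₀ (∑ i, c i) i ≠ 0}.ncard ≤ 2 ∧
      (c i₀ ≠ 0 → {i | Function.update c i₀ (∑ i, c i) i ≠ 0}.ncard ≤ 1) := by
  have hsplit : ∀ s, {i | Function.update c i₀ s i ≠ 0}.ncard =
      ({i | c i ≠ 0} \ {i₀}).ncard + if s = 0 then 0 else 1 := fun s => by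
    split_ifs with hs
    · congr 1
      ext i
      by_cases hi : i = i₀ <;> simp [hi, hs]
    · rw [← Set.ncard_insert_of_notMem (a := i₀) (by simp)]
      congr 1
      ext i
      by_cases hi : i = i₀ <;> simp [hi, hs]
  have hself := hsplit (c i₀)
  have hsum := natCast_ncard_ne_zero c
  rw [Function.update_eq_self] at hself
  rw [hself] at hc hsum
  rw [hsplit, ← hsum]
  generalize ({i | c i ≠ 0} \ {i₀}).ncard = m at *
  have hm : m ≤ 2 := (Nat.le_add_right _ _).trans hc
  by_cases h0 : c i₀ = 0
  · simp only [h0, if_true, add_zero] at *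
    interval_cases m <;> decide
  · simp only [h0, if_false, ne_eq, not_false_eq_true, forall_const] at *
    interval_cases m <;> revert hc <;> decide

/- Replace one of two members containing `e` by the sum of the whole family, which consists of the
edges that lie in exactly one member. -/
lemma HasTwoBasis.exists_ncard_le_one (h : HasTwoBasis G A) (e : Sym2 V) :
    ∃ (ι : Type u) (_ : Finite ι) (x : ι → Sym2 V → ZMod 2), IsTwoBasis G A x ∧
      {i | x i e ≠ 0}.ncard ≤ 1 := by
  classical
  obtain ⟨ι, _, x, hx⟩ := h
  have := Fintype.ofFinite ι
  rcases {i | x i e ≠ 0}.eq_empty_or_nonempty with h | ⟨i₀, hi₀⟩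
  · exact ⟨ι, inferInstance, x, hx, by simp [h]⟩
  let y := Function.update x i₀ (∑ i, x i)
  have hy₀ : y i₀ = ∑ i, x i := Function.update_self ..
  have hy : ∀ i, i ≠ i₀ → y i = x i := fun i hi => Function.update_of_ne hi ..
  have hcount : ∀ f, {i | y i f ≠ 0}.ncard ≤ 2 ∧ (x i₀ f ≠ 0 → {i | y i f ≠ 0}.ncard ≤ 1) := by
    intro f
    have happly : ∀ i, y i f = Function.update (fun i => x i f) i₀ (∑ i, x i f) i := fun i => by
      by_cases hi : i = i₀
      · rw [hi, hy₀, Function.update_self, Finset.sum_apply]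
      · rw [hy i hi, Function.update_of_ne hi]
    simp only [happly]
    exact ncard_update_sum_ne_zero_le _ i₀ (hx.ncard_le f)
  refine ⟨ι, inferInstance, y, ⟨fun i => ?_, fun f => (hcount f).1, fun g hg => ?_⟩,
    (hcount e).2 hi₀⟩
  · by_cases hi : i = i₀
    · rw [hi, hy₀]
      exact Submodule.sum_mem _ fun j _ => hx.mem_cycleSpace j
    · rw [hy i hi]
      exact hx.mem_cycleSpace i
  · have hne : ∀ i, i ≠ i₀ → x i ⬝ᵥ g = 0 := fun i hi => hy i hi ▸ hg i
    have h₀ := hg i₀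
    rw [hy₀, sum_dotProduct, Finset.sum_eq_single i₀ (fun i _ => hne i) (by simp)] at h₀
    exact hx.balancedOn g fun i => if hi : i = i₀ then hi ▸ h₀ else hne i hi

lemma mem_cycleSpace_of_sup_edge {z : Sym2 V → ZMod 2} {u v : V}
    (hz : z ∈ cycleSpace (G ⊔ edge u v) A) (h : z s(u, v) = 0) : z ∈ cycleSpace G A := by
  refine mem_cycleSpace_of_adj hz fun a b hab => ?_
  obtain ⟨hadj, hA⟩ := adj_of_mem_cycleSpace hz hab
  rcases sup_edge_adj_iff.1 hadj with hG | ⟨-, ⟨rfl, rfl⟩ | ⟨rfl, rfl⟩⟩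
  exacts [⟨hG, hA⟩, absurd h hab, absurd (Sym2.eq_swap ▸ h) hab]

/- The constant `c` is the value to give to `g` on the deleted edge. -/
lemma IsTwoBasis.balancedOn_of_sup_edge {ι : Type*} {x : ι → Sym2 V → ZMod 2} {u v : V}
    {g : Sym2 V → ZMod 2} (hx : IsTwoBasis (G ⊔ edge u v) A x) (hG : ¬ G.Adj u v) (c : ZMod 2)
    (h : ∀ i, x i ⬝ᵥ g + x i s(u, v) * c = 0) : BalancedOn G g A := by
  classical
  obtain ⟨p, hp⟩ := hx.balancedOn (g + Pi.single s(u, v) c) fun i => by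
    rw [dotProduct_add, dotProduct_single, h]
  refine ⟨p, fun a ha b hb hab => ?_⟩
  have hne : s(a, b) ≠ s(u, v) := fun h => hG <| by
    rwa [← mem_edgeSet, ← h, mem_edgeSet]
  simpa [hne] using hp a ha b hb (.inl hab)

/- One step of Gaussian elimination clears the coordinate of the deleted edge. -/
lemma IsTwoBasis.eliminate {ι : Type*} [Finite ι] {x : ι → Sym2 V → ZMod 2} {u v : V} {i₀ : ι}
    (hx : IsTwoBasis (G ⊔ edge u v) A x) (hi₀ : x i₀ s(u, v) ≠ 0) (hG : ¬ G.Adj u v) :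
    IsTwoBasis G A fun i => x i + x i s(u, v) • x i₀ where
  mem_cycleSpace i := by
    refine mem_cycleSpace_of_sup_edge ((cycleSpace _ A).add_mem (hx.mem_cycleSpace i)
      ((cycleSpace _ A).smul_mem _ (hx.mem_cycleSpace i₀))) ?_
    have hcancel : ∀ c d : ZMod 2, d ≠ 0 → c + c * d = 0 := by decide
    exact hcancel _ _ hi₀
  ncard_le f := by
    by_cases hf : x i₀ f = 0
    · simpa [hf] using hx.ncard_le f
    have hone : ∀ e, x i₀ e ≠ 0 → ({i | x i e ≠ 0} \ {i₀}).ncard ≤ 1 := fun e he => by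
      rw [Set.ncard_sdiff_singleton_of_mem he]
      exact Nat.sub_le_of_le_add (hx.ncard_le e)
    refine (Set.ncard_le_ncard (t := {i | x i s(u, v) ≠ 0} \ {i₀} ∪ {i | x i f ≠ 0} \ {i₀})
      fun i hi => ?_).trans ((Set.ncard_union_le _ _).trans (add_le_add (hone _ hi₀) (hone f hf)))
    have hcancel : ∀ c d : ZMod 2, c ≠ 0 → d ≠ 0 → d + c * d = 0 := by decide
    have hne : i ≠ i₀ := by
      rintro rfl
      exact hi (hcancel _ _ hi₀ hf)
    by_contra hcon
    simp only [Set.mem_union, Set.mem_sdiff, Set.mem_ofPred_eq, Set.mem_singleton_iff, hne,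
      not_false_eq_true, and_true, not_or, not_not] at hcon
    exact hi (by simp [hcon])
  balancedOn g hg := hx.balancedOn_of_sup_edge hG (x i₀ ⬝ᵥ g) fun i => by
    rw [← smul_eq_mul, ← smul_dotProduct, ← add_dotProduct, hg]

lemma HasTwoBasis.of_sup_edge {u v : V} (h : HasTwoBasis (G ⊔ edge u v) A) : HasTwoBasis G A := by
  by_cases huv : G.Adj u v
  · rwa [sup_edge_of_adj _ huv] at h
  obtain ⟨ι, _, x, hx⟩ := h
  by_cases hi : ∃ i, x i s(u, v) ≠ 0
  · obtain ⟨i, hi⟩ := hi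
    exact ⟨ι, inferInstance, _, hx.eliminate hi huv⟩
  · push Not at hi
    exact ⟨ι, inferInstance, x, fun i => mem_cycleSpace_of_sup_edge (hx.mem_cycleSpace i) (hi i),
      hx.ncard_le, fun g hg => hx.balancedOn_of_sup_edge huv 0 (by simpa using hg)⟩

lemma IsSeparation.hasTwoBasis_of_pair {u v : V} (h : IsSeparation G A A₁ A₂) (huv : u ≠ v)
    (hinter : A₁ ∩ A₂ = {u, v}) (h₁ : HasTwoBasis (G ⊔ edge u v) A₁)
    (h₂ : HasTwoBasis (G ⊔ edge u v) A₂) : HasTwoBasis G A := by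
  obtain ⟨ι, _, x, hx, hx'⟩ := h₁.exists_ncard_le_one s(u, v)
  obtain ⟨κ, _, y, hy, hy'⟩ := h₂.exists_ncard_le_one s(u, v)
  have hadj : (G ⊔ edge u v).Adj u v := sup_edge_adj_iff.2 (.inr ⟨huv, .inl ⟨rfl, rfl⟩⟩)
  refine HasTwoBasis.of_sup_edge ⟨ι ⊕ κ, inferInstance, Sum.elim x y, h.union_eq ▸ hx.sum hy
    ?_ ?_ ?_⟩
  · rw [hinter]
    exact (preconnectedOn_singleton v).insert_of_adj ⟨v, rfl, hadj⟩
  · rintro ⟨a, ha, b, hb, hab⟩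
    have hu : u ∈ A₁ ∩ A₂ := hinter ▸ Set.mem_insert u {v}
    have hv : v ∈ A₁ ∩ A₂ := hinter ▸ Set.mem_insert_of_mem u rfl
    rcases sup_edge_adj_iff.1 hab with hG | ⟨-, ⟨rfl, -⟩ | ⟨rfl, -⟩⟩
    exacts [h.not_touches ⟨a, ha, b, hb, hG⟩, ha.2 hu.2, ha.2 hv.2]
  · rw [hinter]
    rintro a (rfl | rfl) b (rfl | rfl) hab
    exacts [absurd rfl hab.ne, ⟨hx', hy'⟩, Sym2.eq_swap ▸ ⟨hx', hy'⟩, absurd rfl hab.ne]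

/- Mac Lane's criterion, by decomposition into 3-connected pieces: a separator `{u, v}` of smallest
order becomes a virtual edge of both parts. -/
theorem IsPlanarOn.hasTwoBasis (hplanar : IsPlanarOn G A) : HasTwoBasis G A := by
  induction hn : A.ncard using Nat.strong_induction_on generalizing G A with | _ n ih
  subst hn
  have hlt : ∀ {A₁ A₂}, IsSeparation G A A₁ A₂ → A₁.ncard < A.ncard := fun h =>
    Set.ncard_lt_ncard h.left_ssubset
  by_cases hsep : ∀ A₁ A₂, IsSeparation G A A₁ A₂ → (A₁ ∩ A₂).Nontrivial
  swap
  · push Not at hsep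
    obtain ⟨A₁, A₂, hA, hinter⟩ := hsep
    exact hA.hasTwoBasis hinter
      (ih _ (hlt hA) (hplanar.mono hA.left_ssubset.subset) rfl)
      (ih _ (hlt hA.symm) (hplanar.mono hA.symm.left_ssubset.subset) rfl)
  rcases le_or_gt A.ncard 3 with hcard | hcard
  · exact hasTwoBasis_of_ncard_le_three hcard
  by_cases h3 : ∀ S : Set V, S.ncard ≤ 2 → PreconnectedOn G (A \ S)
  · exact ThreeConnectedOn.hasTwoBasis ⟨hcard, h3⟩ hplanar
  push Not at h3
  obtain ⟨S, hS, hS'⟩ := h3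
  obtain ⟨A₁, A₂, hA, hsub⟩ := exists_isSeparation_of_not_preconnectedOn hS'
  obtain ⟨u, v, huv, hinter⟩ : ∃ u v, u ≠ v ∧ A₁ ∩ A₂ = {u, v} :=
    Set.ncard_eq_two.1 (((Set.ncard_le_ncard hsub).trans hS).antisymm
      (Set.one_lt_ncard_iff_nontrivial.2 (hsep A₁ A₂ hA)))
  have hvirtual {B₁ B₂} (hB : IsSeparation G A B₁ B₂) (hB' : B₁ ∩ B₂ = {u, v}) :
      HasTwoBasis (G ⊔ edge u v) B₁ := by
    obtain ⟨C, hCB, hC, huC, hvC⟩ := hB.exists_link huv hB' hsep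
    have hCA : C ⊆ A \ B₁ := hCB.trans (Set.sdiff_subset_sdiff_left hB.symm.left_ssubset.subset)
    exact ih _ (hlt hB) (hplanar.sup_edge hB.left_ssubset.subset hCA hC huC hvC) rfl
  exact hA.hasTwoBasis_of_pair huv hinter (hvirtual hA hinter)
    (hvirtual hA.symm (Set.inter_comm A₂ A₁ ▸ hinter))

end TwoBases

/-! ### Counting edges -/

section Counting

lemma exists_le_edgeCount_le_add_cycleCountLe {V : Type*} [Finite V] (S : SimpleGraph V) (k : ℕ) :
    ∃ G ≤ S, (k + 1 : ℕ) ≤ G.egirth ∧ edgeCount S ≤ edgeCount G + cycleCountLe S k := by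
  let F : Set (Set (Sym2 V)) := {E | ∃ (v : V) (c : S.Walk v v),
    c.IsCycle ∧ c.length ≤ k ∧ {e | e ∈ c.edges} = E}
  have hnonempty : ∀ E : F, E.1.Nonempty := by
    rintro ⟨_, v, c, hc, -, rfl⟩
    exact List.exists_mem_of_ne_nil _ (by simpa using hc.not_nil)
  choose r hr using hnonempty
  refine ⟨S.deleteEdges (Set.range r), deleteEdges_le _, le_egirth.2 fun v c hc => ?_, ?_⟩
  · by_contra! hlt
    have hle := S.deleteEdges_le (Set.range r)
    let E : F := ⟨{e | e ∈ c.edges}, v, c.mapLe hle, hc.mapLe hle, by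
      rw [Walk.length_mapLe]
      exact Nat.lt_succ_iff.1 (by exact_mod_cast hlt), by rw [Walk.edges_mapLe_eq_edges]⟩
    have hmem := c.edges_subset_edgeSet (hr E)
    rw [edgeSet_deleteEdges] at hmem
    exact hmem.2 ⟨E, rfl⟩
  · have hrange : (Set.range r).ncard ≤ F.ncard := by
      simpa only [Nat.card_coe_set_eq] using Finite.card_range_le r
    rw [edgeCount, edgeCount, edgeSet_deleteEdges]
    exact (Set.ncard_le_ncard_sdiff_add_ncard _ _).trans (Nat.add_le_add_left hrange _)

variable {V : Type*} [Fintype V] {G : SimpleGraph V} {A : Set V}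

lemma dotProduct_extend {α β R : Type*} [Fintype α] [Fintype β] [NonUnitalNonAssocSemiring R]
    {f : α → β} (hf : Function.Injective f) (z : β → R) (g : α → R) :
    z ⬝ᵥ Function.extend f g 0 = (z ∘ f) ⬝ᵥ g := by
  refine (Fintype.sum_of_injective f hf _ _ (fun b hb => ?_) fun a => ?_).symm
  · rw [Function.extend_apply' _ _ _ hb, Pi.zero_apply, mul_zero]
  · rw [hf.extend_apply, Function.comp_apply]

/- The signings of the edges orthogonal to all members are coboundaries, which form a space of
dimension at most the number of vertices. -/
lemma IsTwoBasis.edgeCount_le {ι : Type*} [Finite ι] {x : ι → Sym2 V → ZMod 2}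
    (hx : IsTwoBasis G Set.univ x) : edgeCount G ≤ {i | x i ≠ 0}.ncard + Fintype.card V := by
  classical
  have := Fintype.ofFinite ι
  let pairing : (G.edgeSet → ZMod 2) →ₗ[ZMod 2] ({i | x i ≠ 0} → ZMod 2) :=
    Matrix.mulVecLin (Matrix.of fun i e => x i e)
  let coboundary : (V → ZMod 2) →ₗ[ZMod 2] (G.edgeSet → ZMod 2) :=
    LinearMap.pi fun e => Sym2.lift ⟨fun a b => LinearMap.proj a + LinearMap.proj b,
      fun _ _ => add_comm _ _⟩ e.1
  have hker : LinearMap.ker pairing ≤ LinearMap.range coboundary := by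
    intro g hg
    obtain ⟨p, hp⟩ := hx.balancedOn (Function.extend Subtype.val g 0) fun i => by
      by_cases hi : x i = 0
      · rw [hi, zero_dotProduct]
      · exact (dotProduct_extend Subtype.val_injective _ _).trans (congrFun hg ⟨i, hi⟩)
    refine ⟨p, funext fun ⟨e, he⟩ => ?_⟩
    induction e using Sym2.ind with | _ a b
    rw [← Subtype.val_injective.extend_apply g 0 ⟨s(a, b), he⟩]
    exact (hp a trivial b trivial he).symm
  calc edgeCount G = Module.finrank (ZMod 2) (G.edgeSet → ZMod 2) := by
        rw [Module.finrank_fintype_fun_eq_card, edgeCount, ← Nat.card_eq_fintype_card,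
          Nat.card_coe_set_eq]
    _ = Module.finrank (ZMod 2) (LinearMap.range pairing) +
          Module.finrank (ZMod 2) (LinearMap.ker pairing) :=
        pairing.finrank_range_add_finrank_ker.symm
    _ ≤ Module.finrank (ZMod 2) ({i | x i ≠ 0} → ZMod 2) + Module.finrank (ZMod 2) (V → ZMod 2) :=
        add_le_add (Submodule.finrank_le _)
          ((Submodule.finrank_mono hker).trans coboundary.finrank_range_le)
    _ = _ := by
        rw [Module.finrank_fintype_fun_eq_card, Module.finrank_fintype_fun_eq_card,
          ← Nat.card_eq_fintype_card, Nat.card_coe_set_eq]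

lemma le_ncard_of_mem_cycleSpace {z : Sym2 V → ZMod 2} {k : ℕ} (hz : z ∈ cycleSpace G A)
    (h0 : z ≠ 0) (hk : k ≤ G.egirth) : k ≤ {e | z e ≠ 0}.ncard := by
  classical
  obtain ⟨v, c, hc, hcz⟩ := exists_isCycle_of_mem_cycleSpace hz h0
  calc k ≤ c.length := by exact_mod_cast le_egirth.1 hk v c hc
    _ = {e | e ∈ c.edges}.ncard := by
        rw [← c.length_edges, ← List.toFinset_card_of_nodup hc.edges_nodup,
          ← Set.ncard_coe_finset, List.coe_toFinset]
    _ ≤ _ := Set.ncard_le_ncard hcz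

lemma IsTwoBasis.ncard_mul_le {ι : Type*} [Finite ι] {x : ι → Sym2 V → ZMod 2} {k : ℕ}
    (hx : IsTwoBasis G A x) (hk : k ≤ G.egirth) :
    {i | x i ≠ 0}.ncard * k ≤ edgeCount G * 2 := by
  classical
  have := Fintype.ofFinite ι
  have hG : ∀ i e, x i e ≠ 0 → e ∈ G.edgeSet := fun i =>
    Sym2.ind fun a b h => (adj_of_mem_cycleSpace (hx.mem_cycleSpace i) h).1
  rw [edgeCount, Set.ncard_eq_toFinset_card', Set.ncard_eq_toFinset_card']
  refine Finset.card_mul_le_card_mul (fun i e => x i e ≠ 0) (fun i hi => ?_) fun e _ => ?_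
  · refine (le_ncard_of_mem_cycleSpace (hx.mem_cycleSpace i) (Set.mem_toFinset.1 hi) hk).trans ?_
    rw [← Set.ncard_coe_finset]
    exact Set.ncard_le_ncard fun e he =>
      Finset.mem_coe.2 (Finset.mem_filter.2 ⟨Set.mem_toFinset.2 (hG i e he), he⟩)
  · refine le_trans ?_ (hx.ncard_le e)
    rw [← Set.ncard_coe_finset]
    exact Set.ncard_le_ncard fun i hi => (Finset.mem_filter.1 (Finset.mem_coe.1 hi)).2

lemma IsPlanar.mul_edgeCount_le {k : ℕ} (hG : IsPlanar G) (hk : k ≤ G.egirth) :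
    k * edgeCount G ≤ k * Fintype.card V + 2 * edgeCount G := by
  obtain ⟨ι, _, x, hx⟩ := (hG.isPlanarOn Set.univ).hasTwoBasis
  calc k * edgeCount G ≤ k * ({i | x i ≠ 0}.ncard + Fintype.card V) :=
        Nat.mul_le_mul_left k hx.edgeCount_le
    _ ≤ _ := by linarith [hx.ncard_mul_le hk]

lemma mul_card_le_two_mul_edgeCount_add (S : SimpleGraph V) (d : ℕ) :
    (d + 1) * Fintype.card V ≤
      2 * edgeCount S + (d + 1) * {v | vertexDegree S v ≤ d}.ncard := by
  classical
  have hdeg : ∀ v, vertexDegree S v = S.degree v := fun v => by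
    rw [vertexDegree, Set.ncard_eq_toFinset_card', ← card_neighborFinset_eq_degree]
    rfl
  calc (d + 1) * Fintype.card V = ∑ _v : V, (d + 1) := by
        rw [Finset.sum_const, Finset.card_univ, smul_eq_mul, mul_comm]
    _ ≤ ∑ v, (S.degree v + if vertexDegree S v ≤ d then d + 1 else 0) :=
        Finset.sum_le_sum fun v _ => by
          rw [hdeg]
          split_ifs <;> omega
    _ = _ := by
        rw [Finset.sum_add_distrib, sum_degrees_eq_twice_card_edges, edgeCount,
          Set.ncard_eq_toFinset_card', Set.ncard_eq_toFinset_card', Set.toFinset_ofPred,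
          Finset.sum_ite, Finset.sum_const, Finset.sum_const_zero, add_zero, smul_eq_mul,
          mul_comm (d + 1)]
        rfl

end Counting

theorem many_short_cycles_general {V : Type*} [Fintype V] {S : SimpleGraph V}
    (hplanar : IsPlanar S) :
    Fintype.card V ≤ 10 * cycleCountLe S 6 + 15 * {v : V | vertexDegree S v ≤ 2}.ncard := by
  obtain ⟨G, hGS, hgirth, hG⟩ := exists_le_edgeCount_le_add_cycleCountLe S 6
  have hedges := (hplanar.anti hGS).mul_edgeCount_le hgirth
  have hdegree := mul_card_le_two_mul_edgeCount_add S 2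
  linarith

theorem many_short_cycles (k : ℝ) (hk0 : 0 ≤ k) (hk : k < 1 / 15) {V : Type*} [Fintype V]
    (S : SimpleGraph V) (hplanar : IsPlanar S)
    (hdeg : ({v : V | vertexDegree S v ≤ 2}.ncard : ℝ) ≤ k * (Fintype.card V : ℝ)) :
    (1 - 15 * k) / 28 * (Fintype.card V : ℝ) ≤ (cycleCountLe S 6 : ℝ) := by
  have hcount : (Fintype.card V : ℝ) ≤
      10 * (cycleCountLe S 6 : ℝ) + 15 * ({v : V | vertexDegree S v ≤ 2}.ncard : ℝ) := by
    exact_mod_cast many_short_cycles_general hplanar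
  linarith
end

section
/- No 4-regular planar simple graph contains a subgraph isomorphic to K₅ minus an edge, i.e. the graph obtained from the complete graph on 5 vertices by deleting a single edge. -/
/-!
Let `T` be the clique formed by the `n - 2` vertices of the copy of `Kₙ - e` other than the ends
`a, b` of the missing edge, and suppose that no vertex of `T` has a neighbour outside the copy. Let
`C` be the vertex set of the component of `a` in `G - (T ∪ {b})`.

If some vertex of `C` is adjacent to `b`, then `C`, `{b}` and the vertices of `T` are the branch
sets of a `Kₙ`-minor. Otherwise the edges of `G` leaving `C` are exactly the `n - 2` edges from `a`
to `T`. When all degrees are even, the handshake lemma in `G[C]` makes the number of these edges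
even, so this is impossible for odd `n`.
-/

open SimpleGraph Filter Asymptotics

section

variable {V α : Type*} {G : SimpleGraph V}

lemma isMinor_completeGraph_of_pairwise {B : α → Set V}
    (hconn : ∀ i, (G.induce (B i)).Connected)
    (hB : Pairwise fun i j ↦ Disjoint (B i) (B j) ∧ ∃ u ∈ B i, ∃ v ∈ B j, G.Adj u v) :
    IsMinor (completeGraph α) G :=
  ⟨B, hconn, fun _ _ hij ↦ (hB hij).1, fun _ _ hij ↦ (hB hij).2⟩

lemma isMinor_completeGraph_of_connected {f : α → V} (hf : Function.Injective f) {x : α}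
    {C : Set V} (hC : (G.induce C).Connected) (hCf : ∀ i, i ≠ x → f i ∉ C)
    (hadjC : ∀ i, i ≠ x → ∃ u ∈ C, G.Adj u (f i))
    (hadj : ∀ i j, i ≠ x → j ≠ x → i ≠ j → G.Adj (f i) (f j)) :
    IsMinor (completeGraph α) G := by
  classical
  let B : α → Set V := Function.update (fun i ↦ {f i}) x C
  have hBx : B x = C := Function.update_self ..
  have hB : ∀ i, i ≠ x → B i = {f i} := fun i hi ↦ Function.update_of_ne hi ..
  refine isMinor_completeGraph_of_pairwise (B := B) (fun i ↦ ?_) fun i j hij ↦ ?_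
  · obtain rfl | hi := eq_or_ne i x
    · rwa [hBx]
    · rw [hB i hi]
      exact Connected.of_subsingleton
  · obtain rfl | hi := eq_or_ne i x
    · obtain ⟨u, hu, huj⟩ := hadjC j hij.symm
      rw [hBx, hB j hij.symm]
      exact ⟨Set.disjoint_singleton_right.2 (hCf j hij.symm), u, hu, f j, rfl, huj⟩
    obtain rfl | hj := eq_or_ne j x
    · obtain ⟨u, hu, hui⟩ := hadjC i hi
      rw [hBx, hB i hi]
      exact ⟨Set.disjoint_singleton_left.2 (hCf i hi), f i, rfl, u, hu, hui.symm⟩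
    · rw [hB i hi, hB j hj]
      exact ⟨Set.disjoint_singleton.2 (hf.ne hij), f i, rfl, f j, rfl, hadj i j hi hj hij⟩

lemma exists_connected_disjoint_of_notMem (G : SimpleGraph V) {S : Set V} {a : V} (ha : a ∉ S) :
    ∃ C : Set V, a ∈ C ∧ Disjoint C S ∧ (G.induce C).Connected ∧
      ∀ u ∈ C, ∀ v ∉ S, G.Adj u v → v ∈ C := by
  let K := (G.induce Sᶜ).connectedComponentMk ⟨a, ha⟩
  refine ⟨Subtype.val '' K.supp, ⟨⟨a, ha⟩, rfl, rfl⟩, ?_, ?_, ?_⟩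
  · exact Set.disjoint_left.2 fun _ ⟨v, _, hv⟩ ↦ hv ▸ v.2
  · let φ : K.toSimpleGraph →g G.induce (Subtype.val '' K.supp) :=
      ⟨fun v ↦ ⟨v.1, Set.mem_image_of_mem _ v.2⟩, id⟩
    exact K.connected_toSimpleGraph.map φ fun ⟨_, v, hv, hvw⟩ ↦ ⟨⟨v, hv⟩, Subtype.ext hvw⟩
  · rintro _ ⟨u, hu, rfl⟩ v hv huv
    exact ⟨⟨v, hv⟩, K.mem_supp_of_adj_mem_supp hu huv, rfl⟩

lemma degree_induce_eq_ncard {C : Set V} (v : C) [Fintype ((G.induce C).neighborSet v)] :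
    (G.induce C).degree v = (G.neighborSet v ∩ C).ncard := by
  rw [← card_neighborSet_eq_degree, ← Nat.card_eq_fintype_card, Nat.card_coe_set_eq,
    neighborSet_induce, ← Set.ncard_image_of_injective _ Subtype.val_injective,
    Subtype.image_preimage_coe, Set.inter_comm]

lemma even_ncard_neighborSet_sdiff [Finite V] {C : Set V} {a : V} (ha : a ∈ C)
    (heven : ∀ v ∈ C, Even (vertexDegree G v))
    (hclosed : ∀ v ∈ C, v ≠ a → G.neighborSet v ⊆ C) :
    Even (G.neighborSet a \ C).ncard := by
  classical
  have := Fintype.ofFinite C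
  have hsum : (G.neighborSet a ∩ C).ncard + (G.neighborSet a \ C).ncard = vertexDegree G a :=
    Set.ncard_inter_add_ncard_sdiff_eq_ncard ..
  by_contra hodd
  have hdeg : Odd ((G.induce C).degree ⟨a, ha⟩) := by
    rw [degree_induce_eq_ncard, ← Nat.not_even_iff_odd]
    exact fun hinter ↦ hodd ((Nat.even_add.1 (hsum ▸ heven a ha)).1 hinter)
  obtain ⟨⟨w, hw⟩, hwa, hdegw⟩ := exists_ne_odd_degree_of_exists_odd_degree _ _ hdeg
  have hNw : G.neighborSet w ⊆ C := hclosed w hw fun h ↦ hwa (Subtype.ext h)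
  rw [degree_induce_eq_ncard, Set.inter_eq_left.2 hNw] at hdegw
  exact Nat.not_even_iff_odd.2 hdegw (heven w hw)

lemma exists_connected_adj_of_odd_ncard [Finite V] {a b : V} {T : Set V}
    (heven : ∀ v, Even (vertexDegree G v)) (hab : a ≠ b) (hT : Odd T.ncard)
    (haT : T ⊆ G.neighborSet a) (hNT : ∀ t ∈ T, G.neighborSet t ⊆ insert a (insert b T)) :
    ∃ C : Set V, a ∈ C ∧ Disjoint C (insert b T) ∧ (G.induce C).Connected ∧
      ∃ u ∈ C, G.Adj u b := by
  have haS : a ∉ insert b T := fun h ↦ h.elim hab fun haT' ↦ G.loopless.irrefl a (haT haT')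
  obtain ⟨C, haC, hCS, hCconn, hCstep⟩ := exists_connected_disjoint_of_notMem G haS
  refine ⟨C, haC, hCS, hCconn, ?_⟩
  by_contra! hb
  have hclosed : ∀ u ∈ C, u ≠ a → G.neighborSet u ⊆ C := by
    refine fun u hu hua v huv ↦ hCstep u hu v ?_ huv
    rintro (rfl | hvT)
    · exact hb u hu huv
    · exact (hNT v hvT (G.adj_symm huv)).elim hua (Set.disjoint_left.1 hCS hu)
  have hboundary : G.neighborSet a \ C = T := by
    refine Set.Subset.antisymm (fun v ⟨hav, hvC⟩ ↦ ?_) fun t ht ↦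
      ⟨haT ht, Set.disjoint_right.1 hCS (.inr ht)⟩
    have hvS : v ∈ insert b T := by_contra fun hvS ↦ hvC (hCstep a haC v hvS hav)
    exact hvS.resolve_left fun hvb ↦ hb a haC (hvb ▸ hav)
  exact Nat.not_even_iff_odd.2 hT
    (hboundary ▸ even_ncard_neighborSet_sdiff haC (fun v _ ↦ heven v) hclosed)

lemma neighborSet_subset_range_of_vertexDegree_lt [Finite V] [Fintype α] {f : α → V}
    (hf : Function.Injective f) {i : α} (hadj : ∀ j, j ≠ i → G.Adj (f i) (f j))
    (hdeg : vertexDegree G (f i) < Fintype.card α) :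
    G.neighborSet (f i) ⊆ Set.range f := by
  have hsub : f '' {i}ᶜ ⊆ G.neighborSet (f i) := Set.image_subset_iff.2 hadj
  have hcard : (f '' {i}ᶜ).ncard = Fintype.card α - 1 := by
    rw [Set.ncard_image_of_injective _ hf, Set.ncard_compl, Set.ncard_singleton,
      Nat.card_eq_fintype_card]
  have himage : f '' {i}ᶜ = G.neighborSet (f i) :=
    Set.eq_of_subset_of_ncard_le hsub (hcard ▸ Nat.le_sub_one_of_lt hdeg)
  exact himage ▸ Set.image_subset_range f _

lemma exists_connected_adj_of_vertexDegree_lt [Finite V] [Fintype α]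
    (hα : Odd (Fintype.card α)) (heven : ∀ v, Even (vertexDegree G v)) {x y : α} (hxy : x ≠ y)
    {f : α → V} (hf : Function.Injective f)
    (hadj : ∀ i, i ≠ x → i ≠ y → ∀ j, j ≠ i → G.Adj (f i) (f j))
    (hdeg : ∀ i, i ≠ x → i ≠ y → vertexDegree G (f i) < Fintype.card α) :
    ∃ C : Set V, f x ∈ C ∧ Disjoint C (f '' {x}ᶜ) ∧ (G.induce C).Connected ∧
      ∃ u ∈ C, G.Adj u (f y) := by
  have hodd : Odd (f '' {x, y}ᶜ).ncard := by
    rw [Set.ncard_image_of_injective _ hf, Set.ncard_compl, Set.ncard_pair hxy,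
      Nat.card_eq_fintype_card]
    exact Nat.Odd.sub_even (Fintype.one_lt_card_iff.2 ⟨x, y, hxy⟩) hα even_two
  have hS : insert (f y) (f '' {x, y}ᶜ) = f '' {x}ᶜ := by
    rw [← Set.image_insert_eq]
    congr 1
    grind
  have hrange : insert (f x) (f '' {x}ᶜ) = Set.range f := by
    rw [← Set.image_insert_eq, Set.insert_eq, Set.union_compl_self, Set.image_univ]
  rw [← hS] at hrange ⊢
  refine exists_connected_adj_of_odd_ncard heven (hf.ne hxy) hodd ?_ ?_
  · rintro _ ⟨i, hi, rfl⟩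
    obtain ⟨hix, hiy⟩ : i ≠ x ∧ i ≠ y := by simpa using hi
    exact (hadj i hix hiy x hix.symm).symm
  · rintro _ ⟨i, hi, rfl⟩
    obtain ⟨hix, hiy⟩ : i ≠ x ∧ i ≠ y := by simpa using hi
    rw [hrange]
    exact neighborSet_subset_range_of_vertexDegree_lt hf (hadj i hix hiy) (hdeg i hix hiy)

end

theorem no_K5_minus_edge_in_4_regular_planar_general {V α : Type*} [Finite V] [Fintype α]
    {G : SimpleGraph V} (hα : Odd (Fintype.card α)) (hminor : ¬ IsMinor (completeGraph α) G)
    (heven : ∀ v, Even (vertexDegree G v)) {x y : α} (hxy : x ≠ y) {f : α → V}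
    (hf : Function.Injective f)
    (hadj : ∀ i j, ((⊤ : SimpleGraph α).deleteEdges {s(x, y)}).Adj i j → G.Adj (f i) (f j)) :
    ∃ i, i ≠ x ∧ i ≠ y ∧ Fintype.card α ≤ vertexDegree G (f i) := by
  by_contra! hdeg
  have hclique : ∀ i, i ≠ x → i ≠ y → ∀ j, j ≠ i → G.Adj (f i) (f j) := fun i hix hiy j hji ↦
    hadj i j (by simp [deleteEdges_adj, hji.symm, hix, hiy])
  obtain ⟨C, hxC, hCS, hCconn, hyC⟩ :=
    exists_connected_adj_of_vertexDegree_lt hα heven hxy hf hclique hdeg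
  refine hminor (isMinor_completeGraph_of_connected hf hCconn
    (fun i hi ↦ Set.disjoint_right.1 hCS (Set.mem_image_of_mem f hi)) (fun i hi ↦ ?_)
    fun i j hi hj hij ↦ hadj i j ?_)
  · obtain rfl | hiy := eq_or_ne i y
    · exact hyC
    · exact ⟨f x, hxC, (hclique i hi hiy x hi.symm).symm⟩
  · simp [deleteEdges_adj, hij, hi, hj]

theorem no_K5_minus_edge_in_4_regular_planar {V : Type*} [Fintype V] (G : SimpleGraph V)
    (hplanar : IsPlanar G) (hreg : ∀ v, vertexDegree G v = 4) :
    ¬ ∃ f : Fin 5 → V, Function.Injective f ∧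
        ∀ i j : Fin 5,
          ((⊤ : SimpleGraph (Fin 5)).deleteEdges {s(0, 1)}).Adj i j → G.Adj (f i) (f j) := by
  rintro ⟨f, hf, hadj⟩
  obtain ⟨i, -, -, hi⟩ := no_K5_minus_edge_in_4_regular_planar_general (by decide) hplanar.1
    (fun v ↦ by rw [hreg v]; decide) (by decide) hf hadj
  simp [hreg] at hi
end
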